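/- arXiv:math/9902031 — 5 statements merged into one kernel-verified Lean document; each statement's English description precedes it below -/
import Mathlib

section
/- Let k be a field and let q ∈ k be nonzero. There exists a k-algebra homomorphism δ : GL_q(2) → GL_q(2,-2) ⊗ GL_q(-2,2) defined on generators by δ(x_{ij}) = Σ_k z_{ik} ⊗ t_{kj} (for 1 ≤ i,j ≤ 2) and δ(t) = τ ⊗ ξ. -/
open TensorProduct

/-- The five generators `x11, x12, x21, x22, t` of the algebra `GL_q(2)`. -/
inductive XGen : Type
  | x11 | x12 | x21 | x22 | t

def Xf (k : Type) [Field k] : XGen → FreeAlgebra k XGen := FreeAlgebra.ι k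

/-- The defining relations of `GL_q(2)`. -/
inductive GLq2Rel (k : Type) [Field k] (q : k) :
    FreeAlgebra k XGen → FreeAlgebra k XGen → Prop
  | r1 : GLq2Rel k q (Xf k .x12 * Xf k .x11) (q • (Xf k .x11 * Xf k .x12))
  | r2 : GLq2Rel k q (Xf k .x21 * Xf k .x11) (q • (Xf k .x11 * Xf k .x21))
  | r3 : GLq2Rel k q (Xf k .x22 * Xf k .x12) (q • (Xf k .x12 * Xf k .x22))
  | r4 : GLq2Rel k q (Xf k .x22 * Xf k .x21) (q • (Xf k .x21 * Xf k .x22))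
  | r5 : GLq2Rel k q (Xf k .x12 * Xf k .x21) (Xf k .x21 * Xf k .x12)
  | r6 : GLq2Rel k q (Xf k .x11 * Xf k .x22 - Xf k .x22 * Xf k .x11)
      ((q⁻¹ - q) • (Xf k .x12 * Xf k .x21))
  | r7 : GLq2Rel k q (Xf k .x11 * Xf k .t) (Xf k .t * Xf k .x11)
  | r8 : GLq2Rel k q (Xf k .x22 * Xf k .t) (Xf k .t * Xf k .x22)
  | r9 : GLq2Rel k q (Xf k .x12 * Xf k .t) (Xf k .t * Xf k .x12)
  | r10 : GLq2Rel k q (Xf k .x21 * Xf k .t) (Xf k .t * Xf k .x21)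
  | r11 : GLq2Rel k q ((Xf k .x11 * Xf k .x22 - q⁻¹ • (Xf k .x12 * Xf k .x21)) * Xf k .t) 1

/-- The algebra `GL_q(2)`. -/
abbrev GLq2 (k : Type) [Field k] (q : k) := RingQuot (GLq2Rel k q)

/-- The five generators `z11, z12, z21, z22, τ` of the algebra `GL_q(2,-2)`. -/
inductive ZGen : Type
  | z11 | z12 | z21 | z22 | tau

def Zf (k : Type) [Field k] : ZGen → FreeAlgebra k ZGen := FreeAlgebra.ι k

/-- The defining relations of `GL_q(2,-2)`. -/
inductive GLq22Rel (k : Type) [Field k] (q : k) :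
    FreeAlgebra k ZGen → FreeAlgebra k ZGen → Prop
  | r1 : GLq22Rel k q (Zf k .z12 * Zf k .z11) (-(q • (Zf k .z11 * Zf k .z12)))
  | r2 : GLq22Rel k q (Zf k .z21 * Zf k .z11) (q • (Zf k .z11 * Zf k .z21))
  | r3 : GLq22Rel k q (Zf k .z22 * Zf k .z12) (q • (Zf k .z12 * Zf k .z22))
  | r4 : GLq22Rel k q (Zf k .z22 * Zf k .z21) (-(q • (Zf k .z21 * Zf k .z22)))
  | r5 : GLq22Rel k q (Zf k .z12 * Zf k .z21) (-(Zf k .z21 * Zf k .z12))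
  | r6 : GLq22Rel k q (Zf k .z11 * Zf k .z22 + Zf k .z22 * Zf k .z11)
      ((q - q⁻¹) • (Zf k .z12 * Zf k .z21))
  | r7 : GLq22Rel k q (Zf k .z11 * Zf k .tau) (-(Zf k .tau * Zf k .z11))
  | r8 : GLq22Rel k q (Zf k .z22 * Zf k .tau) (-(Zf k .tau * Zf k .z22))
  | r9 : GLq22Rel k q (Zf k .z12 * Zf k .tau) (-(Zf k .tau * Zf k .z12))
  | r10 : GLq22Rel k q (Zf k .z21 * Zf k .tau) (-(Zf k .tau * Zf k .z21))
  | r11 : GLq22Rel k q ((Zf k .z11 * Zf k .z22 + q⁻¹ • (Zf k .z12 * Zf k .z21)) * Zf k .tau) 1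

/-- The algebra `GL_q(2,-2)`. -/
abbrev GLq22 (k : Type) [Field k] (q : k) := RingQuot (GLq22Rel k q)

/-- The five generators `t11, t12, t21, t22, ξ` of the algebra `GL_q(-2,2)`. -/
inductive TGen : Type
  | t11 | t12 | t21 | t22 | xi

def Tf (k : Type) [Field k] : TGen → FreeAlgebra k TGen := FreeAlgebra.ι k

/-- The defining relations of `GL_q(-2,2)`. -/
inductive GLqm22Rel (k : Type) [Field k] (q : k) :
    FreeAlgebra k TGen → FreeAlgebra k TGen → Prop
  | r1 : GLqm22Rel k q (Tf k .t12 * Tf k .t11) (q • (Tf k .t11 * Tf k .t12))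
  | r2 : GLqm22Rel k q (Tf k .t21 * Tf k .t11) (-(q • (Tf k .t11 * Tf k .t21)))
  | r3 : GLqm22Rel k q (Tf k .t22 * Tf k .t12) (-(q • (Tf k .t12 * Tf k .t22)))
  | r4 : GLqm22Rel k q (Tf k .t22 * Tf k .t21) (q • (Tf k .t21 * Tf k .t22))
  | r5 : GLqm22Rel k q (Tf k .t12 * Tf k .t21) (-(Tf k .t21 * Tf k .t12))
  | r6 : GLqm22Rel k q (Tf k .t11 * Tf k .t22 + Tf k .t22 * Tf k .t11)
      ((q⁻¹ - q) • (Tf k .t12 * Tf k .t21))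
  | r7 : GLqm22Rel k q (Tf k .t11 * Tf k .xi) (-(Tf k .xi * Tf k .t11))
  | r8 : GLqm22Rel k q (Tf k .t12 * Tf k .xi) (-(Tf k .xi * Tf k .t12))
  | r9 : GLqm22Rel k q (Tf k .t21 * Tf k .xi) (-(Tf k .xi * Tf k .t21))
  | r10 : GLqm22Rel k q (Tf k .t22 * Tf k .xi) (-(Tf k .xi * Tf k .t22))
  | r11 : GLqm22Rel k q ((Tf k .t11 * Tf k .t22 - q⁻¹ • (Tf k .t12 * Tf k .t21)) * Tf k .xi) 1

/-- The algebra `GL_q(-2,2)`. -/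
abbrev GLqm22 (k : Type) [Field k] (q : k) := RingQuot (GLqm22Rel k q)

noncomputable section

/-- The generating matrix entries `x_{ij}` of `GL_q(2)`. -/
def xM (k : Type) [Field k] (q : k) : Fin 2 → Fin 2 → GLq2 k q :=
  ![![RingQuot.mkAlgHom k (GLq2Rel k q) (Xf k .x11),
     RingQuot.mkAlgHom k (GLq2Rel k q) (Xf k .x12)],
    ![RingQuot.mkAlgHom k (GLq2Rel k q) (Xf k .x21),
     RingQuot.mkAlgHom k (GLq2Rel k q) (Xf k .x22)]]

/-- The element `t` of `GL_q(2)`. -/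
def tE (k : Type) [Field k] (q : k) : GLq2 k q := RingQuot.mkAlgHom k (GLq2Rel k q) (Xf k .t)

/-- The generating matrix entries `z_{ij}` of `GL_q(2,-2)`. -/
def zM (k : Type) [Field k] (q : k) : Fin 2 → Fin 2 → GLq22 k q :=
  ![![RingQuot.mkAlgHom k (GLq22Rel k q) (Zf k .z11),
     RingQuot.mkAlgHom k (GLq22Rel k q) (Zf k .z12)],
    ![RingQuot.mkAlgHom k (GLq22Rel k q) (Zf k .z21),
     RingQuot.mkAlgHom k (GLq22Rel k q) (Zf k .z22)]]

/-- The element `τ` of `GL_q(2,-2)`. -/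
def tauE (k : Type) [Field k] (q : k) : GLq22 k q :=
  RingQuot.mkAlgHom k (GLq22Rel k q) (Zf k .tau)

/-- The generating matrix entries `t_{ij}` of `GL_q(-2,2)`. -/
def tM (k : Type) [Field k] (q : k) : Fin 2 → Fin 2 → GLqm22 k q :=
  ![![RingQuot.mkAlgHom k (GLqm22Rel k q) (Tf k .t11),
     RingQuot.mkAlgHom k (GLqm22Rel k q) (Tf k .t12)],
    ![RingQuot.mkAlgHom k (GLqm22Rel k q) (Tf k .t21),
     RingQuot.mkAlgHom k (GLqm22Rel k q) (Tf k .t22)]]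

/-- The element `ξ` of `GL_q(-2,2)`. -/
def xiE (k : Type) [Field k] (q : k) : GLqm22 k q :=
  RingQuot.mkAlgHom k (GLqm22Rel k q) (Tf k .xi)

/-!
For `q ≠ 0`, the quadratic relations of each of the three algebras say that the generating matrix
`X` is a similitude between two bilinear forms, `Xᵀ A X = D B` and `X B Xᵀ = D A`, where `A` and `B`
are each one of the forms `!![0, -q; 1, 0]` and `!![0, q; 1, 0]`, and `D` is the quantum determinant
up to sign. For `GL_q(2)` both forms are the first one, while `GL_q(2,-2)` relates the first to the
second and `GL_q(-2,2)` the second to the first. Similitudes with commuting entries compose and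
their factors `D` multiply, which gives at once the quadratic relations of `GL_q(2)` for
`Σ_l z_{il} ⊗ t_{lj}` and the multiplicativity of the determinant.
-/

section Commute

variable {R l m n : Type*} [Semiring R] [Fintype m]

theorem transpose_mul_of_commute {X : Matrix l m R} {Y : Matrix m n R}
    (h : ∀ i a j, Commute (X i a) (Y a j)) :
    (X * Y).transpose = Y.transpose * X.transpose := by
  ext i j
  simp only [Matrix.transpose_apply, Matrix.mul_apply]
  exact Finset.sum_congr rfl fun a _ => h j a i

theorem mul_smul_of_commute {a : R} {X : Matrix l m R} (h : ∀ i j, Commute a (X i j))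
    (Y : Matrix m n R) : X * (a • Y) = a • (X * Y) := by
  ext i j
  simp only [Matrix.mul_apply, Matrix.smul_apply, smul_eq_mul, Finset.mul_sum, ← mul_assoc,
    (h _ _).eq]

end Commute

section TensorMatrixMul

variable {k R S l m n : Type*} [CommSemiring k] [Semiring R] [Algebra k R] [Semiring S]
  [Algebra k S] [Fintype m]

variable (k) in
/-- The product of two matrices in which entries are multiplied by `⊗ₜ`: the matrix form of the
comultiplication of quantum matrix algebras. -/
def tensorMatrixMul (X : Matrix l m R) (Y : Matrix m n S) : Matrix l n (R ⊗[k] S) :=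
  Matrix.of fun i j => ∑ a, X i a ⊗ₜ[k] Y a j

theorem tensorMatrixMul_apply (X : Matrix l m R) (Y : Matrix m n S) (i : l) (j : n) :
    tensorMatrixMul k X Y i j = ∑ a, X i a ⊗ₜ[k] Y a j :=
  rfl

theorem tensorMatrixMul_eq_map_mul_map (X : Matrix l m R) (Y : Matrix m n S) :
    tensorMatrixMul k X Y =
      X.map (Algebra.TensorProduct.includeLeft : R →ₐ[k] R ⊗[k] S) *
        Y.map (Algebra.TensorProduct.includeRight : S →ₐ[k] R ⊗[k] S) := by
  ext i j
  simp [tensorMatrixMul_apply, Matrix.mul_apply]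

end TensorMatrixMul

section FormSimilitude

variable {k R S l m n : Type*} [CommSemiring k] [Semiring R] [Algebra k R] [Semiring S]
  [Algebra k S] [Fintype l] [Fintype m] [Fintype n]

/-- A matrix `X` with noncommuting entries is a similitude between the bilinear forms `A` and `B`,
with factor `D`, if it carries `A` to `D • B` and, transposed, `B` to `D • A`. The second equation
stands in for the usual one between the inverse forms, so `A` and `B` have to be normalized
compatibly. -/
structure IsFormSimilitude (A : Matrix m m k) (B : Matrix n n k) (X : Matrix m n R) (D : R) :
    Prop where
  transpose_mul_mul : X.transpose * A.map (algebraMap k R) * X = D • B.map (algebraMap k R)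
  mul_mul_transpose : X * B.map (algebraMap k R) * X.transpose = D • A.map (algebraMap k R)

theorem IsFormSimilitude.map {A : Matrix m m k} {B : Matrix n n k} {X : Matrix m n R} {D : R}
    (h : IsFormSimilitude A B X D) (f : R →ₐ[k] S) : IsFormSimilitude A B (X.map f) (f D) := by
  have h₁ := congrArg (fun M => M.map f) h.transpose_mul_mul
  have h₂ := congrArg (fun M => M.map f) h.mul_mul_transpose
  have map_algebraMap : f ∘ algebraMap k R = algebraMap k S := funext f.commutes
  simp only [Matrix.map_mul, Matrix.map_smulₛₗ f f D (map_mul f D), Matrix.map_map, map_algebraMap]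
    at h₁ h₂
  exact ⟨h₁, h₂⟩

theorem IsFormSimilitude.mul {A : Matrix l l k} {B : Matrix m m k} {C : Matrix n n k}
    {X : Matrix l m R} {Y : Matrix m n R} {D E : R}
    (hX : IsFormSimilitude A B X D) (hY : IsFormSimilitude B C Y E)
    (hXY : ∀ i a j, Commute (X i a) (Y a j)) (hDY : ∀ i j, Commute D (Y i j))
    (hEX : ∀ i j, Commute E (X i j)) (hDE : Commute D E) :
    IsFormSimilitude A C (X * Y) (D * E) where
  transpose_mul_mul := by
    have hDYt : ∀ i j, Commute D (Y.transpose i j) := fun i j => hDY j i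
    calc (X * Y).transpose * A.map (algebraMap k R) * (X * Y)
        = Y.transpose * (X.transpose * A.map (algebraMap k R) * X) * Y := by
          simp only [transpose_mul_of_commute hXY, Matrix.mul_assoc]
      _ = D • (Y.transpose * B.map (algebraMap k R) * Y) := by
          rw [hX.transpose_mul_mul, mul_smul_of_commute hDYt, Matrix.smul_mul]
      _ = (D * E) • C.map (algebraMap k R) := by rw [hY.transpose_mul_mul, smul_smul]
  mul_mul_transpose := by
    calc X * Y * C.map (algebraMap k R) * (X * Y).transpose
        = X * (Y * C.map (algebraMap k R) * Y.transpose) * X.transpose := by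
          simp only [transpose_mul_of_commute hXY, Matrix.mul_assoc]
      _ = E • (X * B.map (algebraMap k R) * X.transpose) := by
          rw [hY.mul_mul_transpose, mul_smul_of_commute hEX, Matrix.smul_mul]
      _ = (D * E) • A.map (algebraMap k R) := by
          rw [hX.mul_mul_transpose, smul_smul, hDE.eq]

protected theorem IsFormSimilitude.tensorMatrixMul {A : Matrix l l k} {B : Matrix m m k}
    {C : Matrix n n k} {X : Matrix l m R} {Y : Matrix m n S} {D : R} {E : S}
    (hX : IsFormSimilitude A B X D) (hY : IsFormSimilitude B C Y E) :
    IsFormSimilitude A C (tensorMatrixMul k X Y) (D ⊗ₜ[k] E) := by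
  have commute_include (r : R) (s : S) : Commute (r ⊗ₜ[k] (1 : S)) ((1 : R) ⊗ₜ[k] s) :=
    (Commute.one_right r).tmul (Commute.one_left s)
  have h := (hX.map (Algebra.TensorProduct.includeLeft : R →ₐ[k] R ⊗[k] S)).mul
    (hY.map Algebra.TensorProduct.includeRight)
    (fun _ _ _ => commute_include _ _) (fun _ _ => commute_include _ _)
    (fun _ _ => (commute_include _ _).symm) (commute_include _ _)
  simpa [tensorMatrixMul_eq_map_mul_map] using h

end FormSimilitude

section QuantumMatrix

variable {k R S : Type*} [Field k] [Ring R] [Algebra k R] [Ring S] [Algebra k S]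

/-- The quadratic relations common to the three algebras, with coefficient `r` inside each row and
`c` inside each column: `(r, c)` is `(q, q)` for `GL_q(2)`, `(-q, q)` for `GL_q(2,-2)` and `(q, -q)`
for `GL_q(-2,2)`. Only parameters with `r ^ 2 = c ^ 2 ≠ 0` are of interest. -/
structure IsQuantumMatrix (r c : k) (X : Matrix (Fin 2) (Fin 2) R) : Prop where
  row : ∀ i, X i 1 * X i 0 = r • (X i 0 * X i 1)
  col : ∀ j, X 1 j * X 0 j = c • (X 0 j * X 1 j)
  antidiag : X 0 1 * X 1 0 = (r / c) • (X 1 0 * X 0 1)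
  diag : X 0 0 * X 1 1 - (r / c) • (X 1 1 * X 0 0) = (r⁻¹ - r) • (X 0 1 * X 1 0)

/-- The quantum determinant of a matrix with row coefficient `r`. -/
def quantumDet (r : k) (X : Matrix (Fin 2) (Fin 2) R) : R :=
  X 0 0 * X 1 1 - r⁻¹ • (X 0 1 * X 1 0)

/-- The bilinear form that vanishes on `(v, v)` exactly when `v` satisfies the quantum plane
relation `v₁ v₀ = q v₀ v₁`. -/
def quantumPlaneForm (q : k) : Matrix (Fin 2) (Fin 2) k :=
  !![0, -q; 1, 0]

theorem mul_quantumPlaneForm_mul_eq_smul_iff {p q : k} {U V : Matrix (Fin 2) (Fin 2) R} {D : R} :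
    U * (quantumPlaneForm p).map (algebraMap k R) * V =
        D • (quantumPlaneForm q).map (algebraMap k R) ↔
      (∀ i, U i 1 * V 0 i = p • (U i 0 * V 1 i)) ∧
        U 0 1 * V 0 1 - p • (U 0 0 * V 1 1) = -(q • D) ∧
        U 1 1 * V 0 0 - p • (U 1 0 * V 1 0) = D := by
  have entry (i j : Fin 2) : (U * (quantumPlaneForm p).map (algebraMap k R) * V) i j =
      U i 1 * V 0 j - p • (U i 0 * V 1 j) := by
    simp [Matrix.mul_apply, quantumPlaneForm, Algebra.smul_def, ← mul_assoc,
      (Algebra.commutes p (U i 0)).symm, sub_eq_add_neg]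
  have form_smul : D • (quantumPlaneForm q).map (algebraMap k R) = !![0, -(q • D); D, 0] := by
    ext i j
    fin_cases i <;> fin_cases j <;>
      simp [quantumPlaneForm, Algebra.smul_def, (Algebra.commutes q D).symm]
  rw [form_smul, ← Matrix.ext_iff]
  simp only [entry, Fin.forall_fin_two, Matrix.of_apply, Matrix.cons_val_zero,
    Matrix.cons_val_one, sub_eq_zero]
  tauto

theorem isFormSimilitude_quantumPlaneForm_iff {r c : k} (hr : r ≠ 0) (hrc : r ^ 2 = c ^ 2)
    {X : Matrix (Fin 2) (Fin 2) R} {D : R} :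
    IsFormSimilitude (quantumPlaneForm c) (quantumPlaneForm r) X D ↔
      IsQuantumMatrix r c X ∧ D = (r / c) • quantumDet r X := by
  have hc : c ≠ 0 := fun hc => hr (by simpa [hc] using hrc)
  constructor
  · rintro ⟨hcols, hrows⟩
    obtain ⟨hcol, -, hcol'⟩ := mul_quantumPlaneForm_mul_eq_smul_iff.mp hcols
    obtain ⟨hrow, hrow', hrow''⟩ := mul_quantumPlaneForm_mul_eq_smul_iff.mp hrows
    simp only [Matrix.transpose_apply] at hcol hcol' hrow hrow' hrow''
    have hD : D = (r / c) • quantumDet r X := by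
      rw [quantumDet]
      linear_combination (norm := (match_scalars <;> grind)) c⁻¹ • hrow'
    have hanti : X 0 1 * X 1 0 = (r / c) • (X 1 0 * X 0 1) := by
      linear_combination (norm := (match_scalars <;> grind)) c⁻¹ • (hrow'' - hcol')
    refine ⟨⟨hrow, hcol, hanti, ?_⟩, hD⟩
    rw [quantumDet] at hD
    linear_combination (norm := (match_scalars <;> grind)) (-(r / c)) • (hcol' + hD)
  · rintro ⟨h, rfl⟩
    constructor <;> rw [mul_quantumPlaneForm_mul_eq_smul_iff, quantumDet]
    · refine ⟨h.col, ?_, ?_⟩ <;> simp only [Matrix.transpose_apply]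
      · linear_combination (norm := (match_scalars <;> grind)) (-(r / c)) • h.antidiag
      · linear_combination (norm := (match_scalars <;> grind)) (-(r / c)) • h.diag
    · refine ⟨h.row, ?_, ?_⟩ <;> simp only [Matrix.transpose_apply]
      · match_scalars <;> grind
      · linear_combination (norm := (match_scalars <;> grind))
          (-(r / c)) • h.diag + c • h.antidiag

/-- The relations of a quantum general linear group: `X` is a quantum matrix and `t` inverts its
quantum determinant, commuting with the entries of `X` up to the sign `r / c`. -/
structure IsQuantumGL (r c : k) (X : Matrix (Fin 2) (Fin 2) R) (t : R) : Prop
    extends IsQuantumMatrix r c X where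
  mul_inv_det : ∀ i j, X i j * t = (r / c) • (t * X i j)
  det_mul_inv_det : quantumDet r X * t = 1

theorem IsQuantumMatrix.isFormSimilitude_tensorMatrixMul {r s c : k} (hr : r ≠ 0)
    (hrc : r ^ 2 = c ^ 2) (hsr : s ^ 2 = r ^ 2) {X : Matrix (Fin 2) (Fin 2) R}
    {Y : Matrix (Fin 2) (Fin 2) S} (hX : IsQuantumMatrix r c X) (hY : IsQuantumMatrix s r Y) :
    IsFormSimilitude (quantumPlaneForm c) (quantumPlaneForm s) (tensorMatrixMul k X Y)
      ((s / c) • quantumDet r X ⊗ₜ[k] quantumDet s Y) := by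
  have hs : s ≠ 0 := fun hs => hr (by simpa [hs] using hsr.symm)
  have h := ((isFormSimilitude_quantumPlaneForm_iff hr hrc).mpr ⟨hX, rfl⟩).tensorMatrixMul
    ((isFormSimilitude_quantumPlaneForm_iff hs hsr).mpr ⟨hY, rfl⟩)
  rwa [smul_tmul_smul, div_mul_div_cancel₀' hr] at h

protected theorem IsQuantumGL.tensorMatrixMul {r s c : k} (hr : r ≠ 0) (hrc : r ^ 2 = c ^ 2)
    (hsr : s ^ 2 = r ^ 2) {X : Matrix (Fin 2) (Fin 2) R} {Y : Matrix (Fin 2) (Fin 2) S}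
    {t : R} {u : S} (hX : IsQuantumGL r c X t) (hY : IsQuantumGL s r Y u) :
    IsQuantumGL s c (tensorMatrixMul k X Y) (t ⊗ₜ[k] u) := by
  have hs : s ≠ 0 := fun hs => hr (by simpa [hs] using hsr.symm)
  have hc : c ≠ 0 := fun hc => hr (by simpa [hc] using hrc)
  obtain ⟨hXY, hdet⟩ := (isFormSimilitude_quantumPlaneForm_iff hs (hsr.trans hrc)).mp
    (hX.isFormSimilitude_tensorMatrixMul hr hrc hsr hY.toIsQuantumMatrix)
  have quantumDet_eq : quantumDet s (tensorMatrixMul k X Y) =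
      quantumDet r X ⊗ₜ[k] quantumDet s Y :=
    (smul_right_injective _ (div_ne_zero hs hc) hdet).symm
  refine ⟨hXY, fun i j => ?_, ?_⟩
  · calc tensorMatrixMul k X Y i j * t ⊗ₜ[k] u
        = ∑ a, (X i a * t) ⊗ₜ[k] (Y a j * u) := by
          simp only [tensorMatrixMul_apply, Finset.sum_mul, Algebra.TensorProduct.tmul_mul_tmul]
      _ = ∑ a, (s / c) • (t * X i a) ⊗ₜ[k] (u * Y a j) := by
          simp only [hX.mul_inv_det, hY.mul_inv_det, smul_tmul_smul, div_mul_div_cancel₀' hr]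
      _ = (s / c) • (t ⊗ₜ[k] u * tensorMatrixMul k X Y i j) := by
          simp only [tensorMatrixMul_apply, Finset.mul_sum, Finset.smul_sum,
            Algebra.TensorProduct.tmul_mul_tmul]
  · rw [quantumDet_eq, Algebra.TensorProduct.tmul_mul_tmul, hX.det_mul_inv_det,
      hY.det_mul_inv_det, Algebra.TensorProduct.one_def]

end QuantumMatrix

section Generators

variable {k : Type} [Field k] {q : k}

theorem isQuantumGL_zM (hq : q ≠ 0) : IsQuantumGL (-q) q (Matrix.of (zM k q)) (tauE k q) := by
  have sign : -q / q = -1 := neg_div_self hq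
  have rel {x y} (h : GLq22Rel k q x y) := RingQuot.mkAlgHom_rel k h
  -- `simp` does not find `neg_smul` through the instances on `RingQuot`.
  have neg_smul' (a : k) (x : GLq22 k q) : -a • x = -(a • x) := neg_smul a x
  refine ⟨⟨fun i => ?_, fun j => ?_, ?_, ?_⟩, fun i j => ?_, ?_⟩
  · fin_cases i
    · simpa [zM, neg_smul'] using rel .r1
    · simpa [zM, neg_smul'] using rel .r4
  · fin_cases j
    · simpa [zM, neg_smul'] using rel .r2
    · simpa [zM, neg_smul'] using rel .r3
  · simpa [zM, sign, neg_smul'] using rel .r5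
  · simpa [zM, sign, neg_smul', neg_add_eq_sub] using rel .r6
  · fin_cases i <;> fin_cases j
    · simpa [zM, tauE, sign, neg_smul'] using rel .r7
    · simpa [zM, tauE, sign, neg_smul'] using rel .r9
    · simpa [zM, tauE, sign, neg_smul'] using rel .r10
    · simpa [zM, tauE, sign, neg_smul'] using rel .r8
  · simpa [quantumDet, zM, tauE, inv_neg, neg_smul'] using rel .r11

theorem isQuantumGL_tM (hq : q ≠ 0) : IsQuantumGL q (-q) (Matrix.of (tM k q)) (xiE k q) := by
  have sign : q / -q = -1 := div_neg_self hq
  have rel {x y} (h : GLqm22Rel k q x y) := RingQuot.mkAlgHom_rel k h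
  have neg_smul' (a : k) (x : GLqm22 k q) : -a • x = -(a • x) := neg_smul a x
  refine ⟨⟨fun i => ?_, fun j => ?_, ?_, ?_⟩, fun i j => ?_, ?_⟩
  · fin_cases i
    · simpa [tM, neg_smul'] using rel .r1
    · simpa [tM, neg_smul'] using rel .r4
  · fin_cases j
    · simpa [tM, neg_smul'] using rel .r2
    · simpa [tM, neg_smul'] using rel .r3
  · simpa [tM, sign, neg_smul'] using rel .r5
  · simpa [tM, sign, neg_smul'] using rel .r6
  · fin_cases i <;> fin_cases j
    · simpa [tM, xiE, sign, neg_smul'] using rel .r7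
    · simpa [tM, xiE, sign, neg_smul'] using rel .r8
    · simpa [tM, xiE, sign, neg_smul'] using rel .r9
    · simpa [tM, xiE, sign, neg_smul'] using rel .r10
  · simpa [quantumDet, tM, xiE] using rel .r11

theorem IsQuantumGL.exists_algHom {R : Type*} [Ring R] [Algebra k R] (hq : q ≠ 0)
    {X : Matrix (Fin 2) (Fin 2) R} {t : R} (h : IsQuantumGL q q X t) :
    ∃ φ : GLq2 k q →ₐ[k] R, (∀ i j, φ (xM k q i j) = X i j) ∧ φ (tE k q) = t := by
  let g : XGen → R := fun
    | .x11 => X 0 0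
    | .x12 => X 0 1
    | .x21 => X 1 0
    | .x22 => X 1 1
    | .t => t
  have lift_Xf (x : XGen) : FreeAlgebra.lift k g (Xf k x) = g x := FreeAlgebra.lift_ι_apply g x
  have hantidiag := h.antidiag
  have hdiag := h.diag
  have hcomm := h.mul_inv_det
  have hdet := h.det_mul_inv_det
  rw [quantumDet] at hdet
  simp only [div_self hq, one_smul] at hantidiag hdiag hcomm
  have lift_rel ⦃x y⦄ (hxy : GLq2Rel k q x y) :
      FreeAlgebra.lift k g x = FreeAlgebra.lift k g y := by
    cases hxy <;> simp only [map_mul, map_sub, map_smul, map_one, lift_Xf, g]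
    exacts [h.row 0, h.col 0, h.col 1, h.row 1, hantidiag, hdiag, hcomm 0 0, hcomm 1 1, hcomm 0 1,
      hcomm 1 0, hdet]
  have lift_mk (x : XGen) : RingQuot.liftAlgHom k ⟨FreeAlgebra.lift k g, lift_rel⟩
      (RingQuot.mkAlgHom k (GLq2Rel k q) (Xf k x)) = g x :=
    (RingQuot.liftAlgHom_mkAlgHom_apply k _ _ _).trans (lift_Xf x)
  refine ⟨RingQuot.liftAlgHom k ⟨FreeAlgebra.lift k g, lift_rel⟩, fun i j => ?_, lift_mk .t⟩
  fin_cases i <;> fin_cases j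
  exacts [lift_mk .x11, lift_mk .x12, lift_mk .x21, lift_mk .x22]

end Generators

/-- There is a `k`-algebra homomorphism `δ : GL_q(2) → GL_q(2,-2) ⊗ GL_q(-2,2)`
with `δ(x_{ij}) = Σ_l z_{il} ⊗ t_{lj}` and `δ(t) = τ ⊗ ξ`. -/
theorem GLq2_delta_exists (k : Type) [Field k] (q : k) (hq : q ≠ 0) :
    ∃ δ : GLq2 k q →ₐ[k] GLq22 k q ⊗[k] GLqm22 k q,
      (∀ i j : Fin 2, δ (xM k q i j) = ∑ l : Fin 2, zM k q i l ⊗ₜ[k] tM k q l j) ∧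
      δ (tE k q) = tauE k q ⊗ₜ[k] xiE k q := by
  have hδ : IsQuantumGL q q (tensorMatrixMul k (Matrix.of (zM k q)) (Matrix.of (tM k q)))
      (tauE k q ⊗ₜ[k] xiE k q) :=
    (isQuantumGL_zM hq).tensorMatrixMul (neg_ne_zero.mpr hq) (neg_sq q) (neg_sq q).symm
      (isQuantumGL_tM hq)
  exact hδ.exists_algHom hq

end
end

section
/- Let k be a field and let q ∈ k be nonzero. There exists an anti-isomorphism of k-algebras φ : GL_q(-2,2) → GL_q(2,-2) (a bijective k-linear map with φ(1) = 1 and φ(ab) = φ(b)φ(a) for all a, b) such that φ(t11) = z22 τ, φ(t12) = q τ z12, φ(t21) = q^{-1} z21 τ, φ(t22) = τ z11 and φ(ξ) = z11 z22 + q^{-1} z12 z21. -/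
noncomputable section

/-!
Both algebras are presented by the same relations: those of `GL_q(-2,2)` are those of `GL_q(2,-2)`
with `-q` in place of `q`. Two symmetries of these relations give the anti-isomorphism. Reversing
the multiplication and exchanging the diagonal entries replaces `q` by `-q`. Multiplying a matrix
on the left by `τ`, which anticommutes with its entries, multiplies every quadratic expression in
the entries by `-τ²`; this and a diagonal rescaling give an automorphism of `GL_q(2,-2)` that
exchanges `τ` with the quantum determinant.
-/

section QuantumMatrix

variable {k A B : Type*} [Field k] [Ring A] [Algebra k A] [Ring B] [Algebra k B]

theorem mul_eq_neg_mul_of_inverse {x u v : A} (huv : u * v = 1) (hvu : v * u = 1)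
    (h : x * u = -(u * x)) : x * v = -(v * x) := by
  let U : Aˣ := ⟨u, v, huv, hvu⟩
  have hU : SemiconjBy x (U : A) ((-U : Aˣ) : A) := by
    simpa [SemiconjBy, U] using h
  simpa [SemiconjBy, inv_neg, U] using hU.units_inv_right

theorem mul_mul_mul_eq_neg_of_anticommute {x y u : A} (hx : x * u = -(u * x)) :
    u * x * (u * y) = -(u * u * (x * y)) := by
  rw [mul_assoc u x, ← mul_assoc x u, hx]
  noncomm_ring

theorem commute_mul_of_anticommute {x y u : A} (hx : x * u = -(u * x)) (hy : y * u = -(u * y)) :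
    Commute (x * y) u := by
  rw [commute_iff_eq, mul_assoc, hy, mul_neg, ← mul_assoc, hx, neg_mul, neg_neg, mul_assoc]

/-- The quantum determinant of the matrix `(a, b; c, d)` in the convention of `GL_q(2,-2)`. -/
def qdet (q : k) (a b c d : A) : A :=
  a * d + q⁻¹ • (b * c)

@[simp]
theorem map_qdet (f : A →ₐ[k] B) (q : k) (a b c d : A) :
    f (qdet q a b c d) = qdet q (f a) (f b) (f c) (f d) := by
  simp [qdet]

theorem qdet_smul (q : k) (a b c d : A) {α β γ δ : k} (hdet : α * δ = β * γ) :
    qdet q (α • a) (β • b) (γ • c) (δ • d) = (α * δ) • qdet q a b c d := by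
  simp only [qdet, smul_mul_smul_comm, smul_add, ← hdet, smul_comm q⁻¹]

/-- The defining relations of `GL_q(2,-2)`, imposed on the entries of a matrix `(a, b; c, d)` and
an element `τ` of an algebra. At the parameter `-q` they are the relations of `GL_q(-2,2)`. -/
structure IsQuantumMatrix_s3 (q : k) (a b c d τ : A) : Prop where
  b_mul_a : b * a = -(q • (a * b))
  c_mul_a : c * a = q • (a * c)
  d_mul_b : d * b = q • (b * d)
  d_mul_c : d * c = -(q • (c * d))
  b_mul_c : b * c = -(c * b)
  a_mul_d_add : a * d + d * a = (q - q⁻¹) • (b * c)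
  a_mul_tau : a * τ = -(τ * a)
  b_mul_tau : b * τ = -(τ * b)
  c_mul_tau : c * τ = -(τ * c)
  d_mul_tau : d * τ = -(τ * d)
  qdet_mul_tau : qdet q a b c d * τ = 1

theorem isQuantumMatrix_neg_iff {q : k} {a b c d τ : A} :
    IsQuantumMatrix_s3 (-q) a b c d τ ↔
      b * a = q • (a * b) ∧ c * a = -(q • (a * c)) ∧
      d * b = -(q • (b * d)) ∧ d * c = q • (c * d) ∧
      b * c = -(c * b) ∧ a * d + d * a = (q⁻¹ - q) • (b * c) ∧
      a * τ = -(τ * a) ∧ b * τ = -(τ * b) ∧ c * τ = -(τ * c) ∧ d * τ = -(τ * d) ∧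
      (a * d - q⁻¹ • (b * c)) * τ = 1 := by
  have hsub : -q - (-q)⁻¹ = q⁻¹ - q := by rw [inv_neg, sub_neg_eq_add, neg_add_eq_sub]
  have hdet : qdet (-q) a b c d = a * d - q⁻¹ • (b * c) := by
    rw [qdet, inv_neg, neg_smul, ← sub_eq_add_neg]
  constructor
  · rintro ⟨hba, hca, hdb, hdc, hbc, had, haτ, hbτ, hcτ, hdτ, hD⟩
    rw [neg_smul] at hba hca hdb hdc
    rw [neg_neg] at hba hdc
    exact ⟨hba, hca, hdb, hdc, hbc, hsub ▸ had, haτ, hbτ, hcτ, hdτ, hdet ▸ hD⟩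
  · rintro ⟨hba, hca, hdb, hdc, hbc, had, haτ, hbτ, hcτ, hdτ, hD⟩
    refine ⟨?_, ?_, ?_, ?_, hbc, hsub ▸ had, haτ, hbτ, hcτ, hdτ, hdet ▸ hD⟩ <;>
      simpa only [neg_smul, neg_neg]

namespace IsQuantumMatrix_s3

variable {q : k} {a b c d τ : A}

theorem commute_qdet_tau (h : IsQuantumMatrix_s3 q a b c d τ) : Commute (qdet q a b c d) τ :=
  (commute_mul_of_anticommute h.a_mul_tau h.d_mul_tau).add_left
    ((commute_mul_of_anticommute h.b_mul_tau h.c_mul_tau).smul_left _)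

theorem tau_mul_qdet (h : IsQuantumMatrix_s3 q a b c d τ) : τ * qdet q a b c d = 1 :=
  h.commute_qdet_tau.eq ▸ h.qdet_mul_tau

theorem qdet_tau_mul (h : IsQuantumMatrix_s3 q a b c d τ) :
    qdet q (τ * a) (τ * b) (τ * c) (τ * d) = -τ := by
  calc qdet q (τ * a) (τ * b) (τ * c) (τ * d)
      = -(τ * (τ * qdet q a b c d)) := by
        simp only [qdet, mul_mul_mul_eq_neg_of_anticommute h.a_mul_tau,
          mul_mul_mul_eq_neg_of_anticommute h.b_mul_tau, mul_add, mul_smul_comm, smul_neg, neg_add,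
          mul_assoc]
    _ = -τ := by rw [h.tau_mul_qdet, mul_one]

theorem tau_mul (h : IsQuantumMatrix_s3 q a b c d τ) :
    IsQuantumMatrix_s3 q (τ * a) (τ * b) (τ * c) (τ * d) (-qdet q a b c d) := by
  have anticommute_neg_qdet {x : A} (hx : x * τ = -(τ * x)) :
      τ * x * -qdet q a b c d = -(-qdet q a b c d * (τ * x)) := by
    have hxD := mul_eq_neg_mul_of_inverse h.tau_mul_qdet h.qdet_mul_tau hx
    rw [mul_neg, mul_assoc, hxD, mul_neg, neg_neg, neg_mul, neg_neg, ← mul_assoc, ← mul_assoc,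
      h.tau_mul_qdet, h.qdet_mul_tau]
  have ha {y : A} := mul_mul_mul_eq_neg_of_anticommute (y := y) h.a_mul_tau
  have hb {y : A} := mul_mul_mul_eq_neg_of_anticommute (y := y) h.b_mul_tau
  have hc {y : A} := mul_mul_mul_eq_neg_of_anticommute (y := y) h.c_mul_tau
  have hd {y : A} := mul_mul_mul_eq_neg_of_anticommute (y := y) h.d_mul_tau
  exact {
    b_mul_a := by rw [hb, ha, h.b_mul_a, mul_neg, mul_smul_comm, smul_neg]
    c_mul_a := by rw [hc, ha, h.c_mul_a, mul_smul_comm, smul_neg]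
    d_mul_b := by rw [hd, hb, h.d_mul_b, mul_smul_comm, smul_neg]
    d_mul_c := by rw [hd, hc, h.d_mul_c, mul_neg, mul_smul_comm, smul_neg]
    b_mul_c := by rw [hb, hc, h.b_mul_c, mul_neg]
    a_mul_d_add := by
      rw [ha, hd, hb, ← neg_add, ← mul_add, h.a_mul_d_add, mul_smul_comm, smul_neg]
    a_mul_tau := anticommute_neg_qdet h.a_mul_tau
    b_mul_tau := anticommute_neg_qdet h.b_mul_tau
    c_mul_tau := anticommute_neg_qdet h.c_mul_tau
    d_mul_tau := anticommute_neg_qdet h.d_mul_tau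
    qdet_mul_tau := by rw [h.qdet_tau_mul, neg_mul_neg, h.tau_mul_qdet] }

theorem rescale (h : IsQuantumMatrix_s3 q a b c d τ) {α β γ δ : k} (hdet : α * δ = β * γ)
    (hne : α * δ ≠ 0) :
    IsQuantumMatrix_s3 q (α • a) (β • b) (γ • c) (δ • d) ((α * δ)⁻¹ • τ) where
  b_mul_a := by
    rw [smul_mul_smul_comm, smul_mul_smul_comm, h.b_mul_a, smul_neg, smul_comm, mul_comm β]
  c_mul_a := by rw [smul_mul_smul_comm, smul_mul_smul_comm, h.c_mul_a, smul_comm, mul_comm γ]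
  d_mul_b := by rw [smul_mul_smul_comm, smul_mul_smul_comm, h.d_mul_b, smul_comm, mul_comm δ]
  d_mul_c := by
    rw [smul_mul_smul_comm, smul_mul_smul_comm, h.d_mul_c, smul_neg, smul_comm, mul_comm δ]
  b_mul_c := by rw [smul_mul_smul_comm, smul_mul_smul_comm, h.b_mul_c, smul_neg, mul_comm β]
  a_mul_d_add := by
    rw [smul_mul_smul_comm, smul_mul_smul_comm, smul_mul_smul_comm, mul_comm δ, ← smul_add,
      h.a_mul_d_add, smul_comm, hdet]
  a_mul_tau := by rw [smul_mul_smul_comm, smul_mul_smul_comm, h.a_mul_tau, smul_neg, mul_comm α]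
  b_mul_tau := by rw [smul_mul_smul_comm, smul_mul_smul_comm, h.b_mul_tau, smul_neg, mul_comm β]
  c_mul_tau := by rw [smul_mul_smul_comm, smul_mul_smul_comm, h.c_mul_tau, smul_neg, mul_comm γ]
  d_mul_tau := by rw [smul_mul_smul_comm, smul_mul_smul_comm, h.d_mul_tau, smul_neg, mul_comm δ]
  qdet_mul_tau := by
    rw [qdet_smul q a b c d hdet, smul_mul_smul_comm, mul_inv_cancel₀ hne, h.qdet_mul_tau, one_smul]

theorem twist (h : IsQuantumMatrix_s3 q a b c d τ) {r : k} (hr : r ≠ 0) :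
    IsQuantumMatrix_s3 q (τ * a) (r • (τ * b)) (r⁻¹ • (c * τ)) (d * τ) (qdet q a b c d) := by
  have hdet : (1 : k) * -1 = r * -r⁻¹ := by simp [hr]
  simpa [h.c_mul_tau, h.d_mul_tau] using h.tau_mul.rescale hdet (by simp)

theorem qdet_twist (h : IsQuantumMatrix_s3 q a b c d τ) {r : k} (hr : r ≠ 0) :
    qdet q (τ * a) (r • (τ * b)) (r⁻¹ • (c * τ)) (d * τ) = τ := by
  have hdet : (1 : k) * -1 = r * -r⁻¹ := by simp [hr]
  simpa [h.c_mul_tau, h.d_mul_tau, h.qdet_tau_mul] using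
    qdet_smul q (τ * a) (τ * b) (τ * c) (τ * d) hdet

open MulOpposite in
theorem op_swap (h : IsQuantumMatrix_s3 q a b c d τ) :
    IsQuantumMatrix_s3 (-q) (op d) (op b) (op c) (op a) (op τ) where
  b_mul_a := by simp [← op_mul, ← op_smul, h.d_mul_b]
  c_mul_a := by simp [← op_mul, ← op_smul, ← op_neg, h.d_mul_c]
  d_mul_b := by simp [← op_mul, ← op_smul, ← op_neg, h.b_mul_a]
  d_mul_c := by simp [← op_mul, ← op_smul, h.c_mul_a]
  b_mul_c := by simp [← op_mul, ← op_neg, h.b_mul_c]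
  a_mul_d_add := by
    rw [← op_mul, ← op_mul, ← op_mul, ← op_add, ← op_smul, h.a_mul_d_add, h.b_mul_c, inv_neg]
    congr 1
    module
  a_mul_tau := by simp [← op_mul, ← op_neg, h.d_mul_tau]
  b_mul_tau := by simp [← op_mul, ← op_neg, h.b_mul_tau]
  c_mul_tau := by simp [← op_mul, ← op_neg, h.c_mul_tau]
  d_mul_tau := by simp [← op_mul, ← op_neg, h.a_mul_tau]
  qdet_mul_tau := by
    have hD : qdet (-q) (op d) (op b) (op c) (op a) = op (qdet q a b c d) := by
      simp [qdet, h.b_mul_c, inv_neg]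
    rw [hD, ← op_mul, h.tau_mul_qdet, op_one]

end IsQuantumMatrix_s3

end QuantumMatrix

section UniversalProperty

variable {k : Type} {A : Type*} [Field k] [Ring A] [Algebra k A] {q : k} {a b c d τ : A}

namespace GLq22

theorem isQuantumMatrix (q : k) :
    IsQuantumMatrix_s3 q (zM k q 0 0) (zM k q 0 1) (zM k q 1 0) (zM k q 1 1) (tauE k q) := by
  have rel {x y} (h : GLq22Rel k q x y) := RingQuot.mkAlgHom_rel k h
  exact {
    b_mul_a := by simpa [zM] using rel .r1
    c_mul_a := by simpa [zM] using rel .r2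
    d_mul_b := by simpa [zM] using rel .r3
    d_mul_c := by simpa [zM] using rel .r4
    b_mul_c := by simpa [zM] using rel .r5
    a_mul_d_add := by simpa [zM] using rel .r6
    a_mul_tau := by simpa [zM, tauE] using rel .r7
    b_mul_tau := by simpa [zM, tauE] using rel .r9
    c_mul_tau := by simpa [zM, tauE] using rel .r10
    d_mul_tau := by simpa [zM, tauE] using rel .r8
    qdet_mul_tau := by simpa [zM, tauE, qdet] using rel .r11 }

/-- The algebra homomorphism out of `GL_q(2,-2)` given by elements satisfying its relations. -/
def lift (h : IsQuantumMatrix_s3 q a b c d τ) : GLq22 k q →ₐ[k] A :=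
  RingQuot.liftAlgHom k ⟨FreeAlgebra.lift k fun
    | .z11 => a | .z12 => b | .z21 => c | .z22 => d | .tau => τ, by
    obtain ⟨hba, hca, hdb, hdc, hbc, had, haτ, hbτ, hcτ, hdτ, hD⟩ := h
    rintro _ _ ⟨⟩ <;> simpa [Zf]⟩

theorem lift_zM (h : IsQuantumMatrix_s3 q a b c d τ) (i j : Fin 2) :
    lift h (zM k q i j) = !![a, b; c, d] i j := by
  fin_cases i <;> fin_cases j <;> simp [lift, zM, Zf]

theorem lift_tauE (h : IsQuantumMatrix_s3 q a b c d τ) : lift h (tauE k q) = τ := by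
  simp [lift, tauE, Zf]

theorem algHom_ext {f g : GLq22 k q →ₐ[k] A} (hM : ∀ i j, f (zM k q i j) = g (zM k q i j))
    (hτ : f (tauE k q) = g (tauE k q)) : f = g := by
  refine RingQuot.ringQuot_ext' _ _ _ (FreeAlgebra.hom_ext (funext ?_))
  rintro (_ | _ | _ | _ | _)
  exacts [hM 0 0, hM 0 1, hM 1 0, hM 1 1, hτ]

end GLq22

namespace GLqm22

theorem isQuantumMatrix (q : k) :
    IsQuantumMatrix_s3 (-q) (tM k q 0 0) (tM k q 0 1) (tM k q 1 0) (tM k q 1 1) (xiE k q) := by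
  have rel {x y} (h : GLqm22Rel k q x y) := RingQuot.mkAlgHom_rel k h
  refine isQuantumMatrix_neg_iff.mpr ⟨?_, ?_, ?_, ?_, ?_, ?_, ?_, ?_, ?_, ?_, ?_⟩
  · simpa [tM] using rel .r1
  · simpa [tM] using rel .r2
  · simpa [tM] using rel .r3
  · simpa [tM] using rel .r4
  · simpa [tM] using rel .r5
  · simpa [tM] using rel .r6
  · simpa [tM, xiE] using rel .r7
  · simpa [tM, xiE] using rel .r8
  · simpa [tM, xiE] using rel .r9
  · simpa [tM, xiE] using rel .r10
  · simpa [tM, xiE] using rel .r11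

/-- The algebra homomorphism out of `GL_q(-2,2)` given by elements satisfying its relations. -/
def lift (h : IsQuantumMatrix_s3 (-q) a b c d τ) : GLqm22 k q →ₐ[k] A :=
  RingQuot.liftAlgHom k ⟨FreeAlgebra.lift k fun
    | .t11 => a | .t12 => b | .t21 => c | .t22 => d | .xi => τ, by
    obtain ⟨hba, hca, hdb, hdc, hbc, had, haτ, hbτ, hcτ, hdτ, hD⟩ := isQuantumMatrix_neg_iff.mp h
    rintro _ _ ⟨⟩ <;> simpa [Tf]⟩

theorem lift_tM (h : IsQuantumMatrix_s3 (-q) a b c d τ) (i j : Fin 2) :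
    lift h (tM k q i j) = !![a, b; c, d] i j := by
  fin_cases i <;> fin_cases j <;> simp [lift, tM, Tf]

theorem lift_xiE (h : IsQuantumMatrix_s3 (-q) a b c d τ) : lift h (xiE k q) = τ := by
  simp [lift, xiE, Tf]

theorem algHom_ext {f g : GLqm22 k q →ₐ[k] A} (hM : ∀ i j, f (tM k q i j) = g (tM k q i j))
    (hξ : f (xiE k q) = g (xiE k q)) : f = g := by
  refine RingQuot.ringQuot_ext' _ _ _ (FreeAlgebra.hom_ext (funext ?_))
  rintro (_ | _ | _ | _ | _)
  exacts [hM 0 0, hM 0 1, hM 1 0, hM 1 1, hξ]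

end GLqm22

end UniversalProperty

section Symmetries

variable {k : Type} [Field k]

namespace GLq22

/-- The endomorphism of `GL_q(2,-2)` that sends the generic matrix to `τ` times it, rescaled
entrywise by `(1, r; -r⁻¹, -1)`, and `τ` to the quantum determinant. The signs are absorbed by
writing `τ` on the right of the second row, since `τ` anticommutes with the entries. -/
def twistHom (q : k) {r : k} (hr : r ≠ 0) : GLq22 k q →ₐ[k] GLq22 k q :=
  lift ((isQuantumMatrix q).twist hr)

theorem twistHom_zM (q : k) {r : k} (hr : r ≠ 0) (i j : Fin 2) :
    twistHom q hr (zM k q i j) =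
      !![tauE k q * zM k q 0 0, r • (tauE k q * zM k q 0 1);
        r⁻¹ • (zM k q 1 0 * tauE k q), zM k q 1 1 * tauE k q] i j :=
  lift_zM _ i j

theorem twistHom_tauE (q : k) {r : k} (hr : r ≠ 0) :
    twistHom q hr (tauE k q) = qdet q (zM k q 0 0) (zM k q 0 1) (zM k q 1 0) (zM k q 1 1) :=
  lift_tauE _

theorem twistHom_inv_comp_twistHom (q : k) {r : k} (hr : r ≠ 0) :
    (twistHom q (inv_ne_zero hr)).comp (twistHom q hr) = AlgHom.id k (GLq22 k q) := by
  have h := isQuantumMatrix q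
  refine algHom_ext (fun i j => ?_) ?_
  · fin_cases i <;> fin_cases j <;>
      simp [twistHom_zM, twistHom_tauE, mul_assoc, smul_smul, hr, h.tau_mul_qdet,
        ← mul_assoc _ (tauE k q), h.qdet_mul_tau]
  · simpa [twistHom_zM, twistHom_tauE] using h.qdet_twist (inv_ne_zero hr)

/-- The automorphism `twistHom` of `GL_q(2,-2)`; its inverse is the twist with scale `r⁻¹`. -/
def twistEquiv (q : k) {r : k} (hr : r ≠ 0) : GLq22 k q ≃ₐ[k] GLq22 k q :=
  .ofAlgHom (twistHom q hr) (twistHom q (inv_ne_zero hr))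
    (by simpa only [inv_inv] using twistHom_inv_comp_twistHom q (inv_ne_zero hr))
    (twistHom_inv_comp_twistHom q hr)

/-- The anti-homomorphism `GL_q(2,-2) → GL_q(-2,2)` exchanging the diagonal entries. -/
def swapHom (q : k) : GLq22 k q →ₐ[k] (GLqm22 k q)ᵐᵒᵖ :=
  lift (by simpa using (GLqm22.isQuantumMatrix q).op_swap)

end GLq22

namespace GLqm22

/-- The anti-homomorphism `GL_q(-2,2) → GL_q(2,-2)` exchanging the diagonal entries. -/
def swapHom (q : k) : GLqm22 k q →ₐ[k] (GLq22 k q)ᵐᵒᵖ :=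
  lift (GLq22.isQuantumMatrix q).op_swap

/-- The anti-isomorphism `GL_q(-2,2) → GL_q(2,-2)` exchanging the diagonal entries. -/
def swapEquiv (q : k) : GLqm22 k q ≃ₐ[k] (GLq22 k q)ᵐᵒᵖ :=
  .ofAlgHom (swapHom q) (AlgHom.opComm (GLq22.swapHom q))
    (by
      refine AlgHom.opComm.symm.injective (GLq22.algHom_ext (fun i j => ?_) ?_)
      · fin_cases i <;> fin_cases j <;> simp [swapHom, GLq22.swapHom, lift_tM, GLq22.lift_zM]
      · simp [swapHom, GLq22.swapHom, lift_xiE, GLq22.lift_tauE])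
    (by
      refine algHom_ext (fun i j => ?_) ?_
      · fin_cases i <;> fin_cases j <;> simp [swapHom, GLq22.swapHom, lift_tM, GLq22.lift_zM]
      · simp [swapHom, GLq22.swapHom, lift_xiE, GLq22.lift_tauE])

theorem swapEquiv_tM (q : k) (i j : Fin 2) :
    swapEquiv q (tM k q i j) =
      MulOpposite.op (!![zM k q 1 1, zM k q 0 1; zM k q 1 0, zM k q 0 0] i j) := by
  fin_cases i <;> fin_cases j <;> simp [swapEquiv, swapHom, lift_tM]

theorem swapEquiv_xiE (q : k) : swapEquiv q (xiE k q) = MulOpposite.op (tauE k q) :=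
  lift_xiE _

end GLqm22

end Symmetries

/-- There is an anti-isomorphism of `k`-algebras `φ : GL_q(-2,2) → GL_q(2,-2)`
(a bijective `k`-linear map with `φ(1) = 1` and `φ(ab) = φ(b)φ(a)`) with
`φ(t11) = z22·τ`, `φ(t12) = q·τ·z12`, `φ(t21) = q⁻¹·z21·τ`, `φ(t22) = τ·z11` and
`φ(ξ) = z11·z22 + q⁻¹·z12·z21`. -/
theorem GLqm22_antiIso_GLq22 (k : Type) [Field k] (q : k) (hq : q ≠ 0) :
    ∃ φ : GLqm22 k q →ₗ[k] GLq22 k q,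
      Function.Bijective φ ∧
      φ 1 = 1 ∧
      (∀ a b : GLqm22 k q, φ (a * b) = φ b * φ a) ∧
      φ (tM k q 0 0) = zM k q 1 1 * tauE k q ∧
      φ (tM k q 0 1) = q • (tauE k q * zM k q 0 1) ∧
      φ (tM k q 1 0) = q⁻¹ • (zM k q 1 0 * tauE k q) ∧
      φ (tM k q 1 1) = tauE k q * zM k q 0 0 ∧
      φ (xiE k q) = zM k q 0 0 * zM k q 1 1 + q⁻¹ • (zM k q 0 1 * zM k q 1 0) := by
  let φ : GLqm22 k q ≃ₗ[k] GLq22 k q := (GLqm22.swapEquiv q).toLinearEquiv ≪≫ₗ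
    (MulOpposite.opLinearEquiv k).symm ≪≫ₗ (GLq22.twistEquiv q hq).toLinearEquiv
  have hφ (x) : φ x = GLq22.twistHom q hq (GLqm22.swapEquiv q x).unop := rfl
  refine ⟨φ, φ.bijective, ?_, fun a b => ?_, ?_, ?_, ?_, ?_, ?_⟩
  · simp [hφ]
  · simp [hφ]
  · simp [hφ, GLqm22.swapEquiv_tM, GLq22.twistHom_zM]
  · simp [hφ, GLqm22.swapEquiv_tM, GLq22.twistHom_zM]
  · simp [hφ, GLqm22.swapEquiv_tM, GLq22.twistHom_zM]
  · simp [hφ, GLqm22.swapEquiv_tM, GLq22.twistHom_zM]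
  · simp [hφ, GLqm22.swapEquiv_xiE, GLq22.twistHom_tauE, qdet]

end
end

section
/- Let k be a field and let A be a Hopf algebra over k admitting a Haar measure, i.e. a linear map J : A → k with J(1_A) = 1 and (id_A ⊗ J) ∘ Δ = u_A ∘ J. Let Z be an A-Galois extension of k. Then there exists a unique Haar measure on Z, i.e. a unique linear map μ : Z → k such that (id_A ⊗ μ) ∘ α_Z = u_A ∘ μ and μ(1_Z) = 1. -/
open TensorProduct

/-!
Averaging over `A` with a functional `K` turns a coaction `δ` on `V` into the operator
`E_K = (K ⊗ id) ∘ δ` of `V`. If `J` is left invariant, then so is `f ∘ E_J` for *every* functional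
`f` on `V`, which gives existence. If `K` is right invariant and normalized, then `E_K` takes
coinvariant values, while every left invariant functional `μ` satisfies `μ ∘ E_K = μ`; hence `μ` is
determined by its values on coinvariants, and injectivity of the Galois map leaves only scalars.
A right invariant functional is obtained from a left invariant `J` as `J ∘ S`.
-/

namespace HopfGalois

open Coalgebra HopfAlgebra WithConv

section Antipode

variable {k A B : Type*} [CommSemiring k] [Semiring A] [HopfAlgebra k A] [Semiring B] [Algebra k B]

theorem algHom_comp_antipode_convMul (φ : A →ₐ[k] B) :
    toConv (φ.toLinearMap ∘ₗ antipode k) * toConv φ.toLinearMap = 1 := by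
  have h := LinearMap.algHom_comp_convMul_distrib φ (toConv (antipode k)) (toConv LinearMap.id)
  rw [LinearMap.antipode_mul_id] at h
  exact ofConv_injective (h.symm.trans (by ext a; simp))

theorem algHom_convMul_comp_antipode (φ : A →ₐ[k] B) :
    toConv φ.toLinearMap * toConv (φ.toLinearMap ∘ₗ antipode k) = 1 := by
  have h := LinearMap.algHom_comp_convMul_distrib φ (toConv LinearMap.id) (toConv (antipode k))
  rw [LinearMap.id_mul_antipode] at h
  exact ofConv_injective (h.symm.trans (by ext a; simp))

end Antipode

section Comul

variable {k A : Type*} [CommSemiring k] [Semiring A]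

theorem includeLeft_convMul_includeRight [Bialgebra k A] :
    toConv (Algebra.TensorProduct.includeLeft : A →ₐ[k] A ⊗[k] A).toLinearMap *
        toConv (Algebra.TensorProduct.includeRight : A →ₐ[k] A ⊗[k] A).toLinearMap =
      toConv (Bialgebra.comulAlgHom k A).toLinearMap := by
  ext a
  simp [(ℛ k a).convMul_apply, (ℛ k a).eq]

variable [HopfAlgebra k A]

theorem comul_comp_antipode_convMul_includeLeft :
    toConv ((Bialgebra.comulAlgHom k A).toLinearMap ∘ₗ antipode k) *
        toConv (Algebra.TensorProduct.includeLeft : A →ₐ[k] A ⊗[k] A).toLinearMap =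
      toConv ((Algebra.TensorProduct.includeRight : A →ₐ[k] A ⊗[k] A).toLinearMap ∘ₗ
        antipode k) := by
  refine left_inv_eq_right_inv ?_ (algHom_convMul_comp_antipode _)
  rw [mul_assoc, includeLeft_convMul_includeRight, algHom_comp_antipode_convMul]

theorem sum_comul_antipode_mul_tmul_one {a : A} {ι : Type*} (𝓡 : Repr k a ι) :
    ∑ i ∈ 𝓡.index, comul (R := k) (antipode k (𝓡.left i)) * 𝓡.right i ⊗ₜ[k] (1 : A) =
      1 ⊗ₜ antipode k a := by
  have h := congr($(comul_comp_antipode_convMul_includeLeft (k := k) (A := A)) a)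
  simpa [𝓡.convMul_apply] using h

end Comul

section Slice

variable {k A V W : Type*} [CommSemiring k] [AddCommMonoid A] [Module k A]
  [AddCommMonoid V] [Module k V] [AddCommMonoid W] [Module k W]

/-- The slice map `K ⊗ id : A ⊗ V → V`, `a ⊗ v ↦ K(a) v`, by a functional `K` on `A`. -/
def slice (K : A →ₗ[k] k) : A ⊗[k] V →ₗ[k] V :=
  (TensorProduct.lid k V).toLinearMap ∘ₗ TensorProduct.map K LinearMap.id

@[simp]
theorem slice_tmul (K : A →ₗ[k] k) (a : A) (v : V) : slice K (a ⊗ₜ[k] v) = K a • v := by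
  simp [slice]

theorem slice_map_id (K : A →ₗ[k] k) (φ : V →ₗ[k] W) (t : A ⊗[k] V) :
    slice K (TensorProduct.map LinearMap.id φ t) = φ (slice K t) := by
  induction t with
  | zero => simp
  | tmul a v => simp
  | add s t hs ht => simp only [map_add, hs, ht]

theorem slice_assoc_tmul (K : A →ₗ[k] k) (s : A ⊗[k] A) (v : V) :
    slice K (TensorProduct.assoc k A A V (s ⊗ₜ v)) = slice K s ⊗ₜ v := by
  induction s with
  | zero => simp
  | tmul a b => simp [smul_tmul']
  | add s t hs ht => simp only [map_add, add_tmul, hs, ht]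

theorem rid_map_comp_slice_assoc_tmul (J : A →ₗ[k] k) (f : V →ₗ[k] k) (s : A ⊗[k] A)
    (v : V) :
    TensorProduct.rid k A (TensorProduct.map LinearMap.id (f ∘ₗ slice J)
        (TensorProduct.assoc k A A V (s ⊗ₜ v))) =
      f v • TensorProduct.rid k A (TensorProduct.map LinearMap.id J s) := by
  induction s with
  | zero => simp
  | tmul a b => simp [smul_smul, mul_comm]
  | add s t hs ht => simp only [map_add, add_tmul, smul_add, hs, ht]

theorem apply_rid_map_id (K : A →ₗ[k] k) (μ : V →ₗ[k] k) (t : A ⊗[k] V) :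
    K (TensorProduct.rid k A (TensorProduct.map LinearMap.id μ t)) = μ (slice K t) := by
  induction t with
  | zero => simp
  | tmul a v => simp [mul_comm]
  | add s t hs ht => simp only [map_add, hs, ht]

/-- The averaging operator `E_K = (K ⊗ id) ∘ δ` of a left coaction `δ`. -/
def average (δ : V →ₗ[k] A ⊗[k] V) (K : A →ₗ[k] k) : V →ₗ[k] V :=
  slice K ∘ₗ δ

/-- Coassociativity `(Δ ⊗ id) ∘ δ = (id ⊗ δ) ∘ δ` of a left coaction `δ`. -/
def IsCoassociative [CoalgebraStruct k A] (δ : V →ₗ[k] A ⊗[k] V) : Prop :=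
  (TensorProduct.assoc k A A V).toLinearMap ∘ₗ
      TensorProduct.map (comul (R := k) (A := A)) LinearMap.id ∘ₗ δ =
    TensorProduct.map LinearMap.id δ ∘ₗ δ

theorem IsCoassociative.apply [CoalgebraStruct k A] {δ : V →ₗ[k] A ⊗[k] V}
    (hδ : IsCoassociative δ) (v : V) :
    TensorProduct.assoc k A A V (TensorProduct.map comul LinearMap.id (δ v)) =
      TensorProduct.map LinearMap.id δ (δ v) :=
  LinearMap.congr_fun hδ v

end Slice

section Invariant

variable {k A V : Type*} [CommSemiring k] [Semiring A] [AddCommMonoid V] [Module k V]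

/-- A functional `μ` is left invariant under a left coaction `δ` when `(id ⊗ μ) ∘ δ = u_A ∘ μ`.
Haar measures are the left invariant functionals with value `1` at `1`. -/
def IsLeftInvariant [Algebra k A] (δ : V →ₗ[k] A ⊗[k] V) (μ : V →ₗ[k] k) : Prop :=
  ∀ v, TensorProduct.rid k A (TensorProduct.map LinearMap.id μ (δ v)) = algebraMap k A (μ v)

/-- A functional `K` on a bialgebra is right invariant when `(K ⊗ id) ∘ Δ = u_A ∘ K`. -/
def IsRightInvariant [Bialgebra k A] (K : A →ₗ[k] k) : Prop :=
  ∀ a, slice K (comul (R := k) a) = algebraMap k A (K a)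

/-- The submodule of coinvariants `{v | δ v = 1 ⊗ v}` of a left coaction `δ`. -/
def coinvariants [Algebra k A] (δ : V →ₗ[k] A ⊗[k] V) : Submodule k V :=
  LinearMap.eqLocus δ (TensorProduct.mk k A V 1)

theorem mem_coinvariants [Algebra k A] {δ : V →ₗ[k] A ⊗[k] V} {v : V} :
    v ∈ coinvariants δ ↔ δ v = 1 ⊗ₜ v :=
  Iff.rfl

theorem average_of_mem_coinvariants [Algebra k A] {δ : V →ₗ[k] A ⊗[k] V} {v : V}
    (hv : v ∈ coinvariants δ) (K : A →ₗ[k] k) : average δ K v = K 1 • v := by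
  rw [average, LinearMap.comp_apply, mem_coinvariants.1 hv, slice_tmul]

theorem IsLeftInvariant.apply_average [Algebra k A] {δ : V →ₗ[k] A ⊗[k] V} {μ : V →ₗ[k] k}
    (hμ : IsLeftInvariant δ μ) {K : A →ₗ[k] k} (hK1 : K 1 = 1) (v : V) :
    μ (average δ K v) = μ v := by
  calc μ (average δ K v)
      = K (TensorProduct.rid k A (TensorProduct.map LinearMap.id μ (δ v))) :=
        (apply_rid_map_id K μ (δ v)).symm
    _ = μ v := by rw [hμ, Algebra.algebraMap_eq_smul_one, map_smul, hK1, smul_eq_mul, mul_one]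

theorem rid_map_id_mul_tmul_one [Algebra k A] (J : A →ₗ[k] k) (t : A ⊗[k] A) (b : A) :
    TensorProduct.rid k A (TensorProduct.map LinearMap.id J (t * b ⊗ₜ 1)) =
      TensorProduct.rid k A (TensorProduct.map LinearMap.id J t) * b := by
  induction t with
  | zero => simp
  | tmul x y => simp
  | add s t hs ht => simp only [add_mul, map_add, hs, ht]

theorem IsLeftInvariant.comp_antipode [HopfAlgebra k A] {J : A →ₗ[k] k}
    (hJ : IsLeftInvariant comul J) : IsRightInvariant (J ∘ₗ antipode k) := by
  intro a
  calc slice (J ∘ₗ antipode k) (comul (R := k) a)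
      = ∑ i ∈ (ℛ k a).index,
          algebraMap k A (J (antipode k ((ℛ k a).left i))) * (ℛ k a).right i := by
        simp [← (ℛ k a).eq, Algebra.smul_def]
    _ = TensorProduct.rid k A (TensorProduct.map LinearMap.id J
          (∑ i ∈ (ℛ k a).index,
            comul (R := k) (antipode k ((ℛ k a).left i)) * (ℛ k a).right i ⊗ₜ 1)) := by
        simp only [map_sum, rid_map_id_mul_tmul_one, hJ _]
    _ = algebraMap k A (J (antipode k a)) := by
        simp [sum_comul_antipode_mul_tmul_one, Algebra.algebraMap_eq_smul_one]

variable [Bialgebra k A] {δ : V →ₗ[k] A ⊗[k] V}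

theorem IsLeftInvariant.rid_map_comp_slice {J : A →ₗ[k] k}
    (hJ : IsLeftInvariant comul J) (f : V →ₗ[k] k) (t : A ⊗[k] V) :
    TensorProduct.rid k A (TensorProduct.map LinearMap.id (f ∘ₗ slice J)
        (TensorProduct.assoc k A A V (TensorProduct.map comul LinearMap.id t))) =
      algebraMap k A (f (slice J t)) := by
  induction t with
  | zero => simp
  | tmul a v =>
    rw [TensorProduct.map_tmul, LinearMap.id_apply, rid_map_comp_slice_assoc_tmul, hJ,
      slice_tmul, map_smul, smul_eq_mul, mul_comm, map_mul, Algebra.smul_def]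
  | add s t hs ht => simp only [map_add, hs, ht]

theorem IsLeftInvariant.comp_average {J : A →ₗ[k] k} (hJ : IsLeftInvariant comul J)
    (hδ : IsCoassociative δ) (f : V →ₗ[k] k) : IsLeftInvariant δ (f ∘ₗ average δ J) := by
  intro v
  calc TensorProduct.rid k A (TensorProduct.map LinearMap.id (f ∘ₗ average δ J) (δ v))
      = TensorProduct.rid k A (TensorProduct.map LinearMap.id (f ∘ₗ slice J)
          (TensorProduct.map LinearMap.id δ (δ v))) := by
        rw [TensorProduct.map_map, LinearMap.id_comp]; rfl
    _ = algebraMap k A (f (slice J (δ v))) := by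
        rw [← hδ.apply, hJ.rid_map_comp_slice]

theorem IsRightInvariant.slice_assoc_map_comul {K : A →ₗ[k] k} (hK : IsRightInvariant K)
    (t : A ⊗[k] V) :
    slice K (TensorProduct.assoc k A A V (TensorProduct.map comul LinearMap.id t)) =
      1 ⊗ₜ slice K t := by
  induction t with
  | zero => simp
  | tmul a v =>
    rw [TensorProduct.map_tmul, LinearMap.id_apply, slice_assoc_tmul, hK,
      Algebra.algebraMap_eq_smul_one, smul_tmul, slice_tmul]
  | add s t hs ht => simp only [map_add, tmul_add, hs, ht]

theorem IsRightInvariant.average_mem_coinvariants {K : A →ₗ[k] k} (hK : IsRightInvariant K)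
    (hδ : IsCoassociative δ) (v : V) : average δ K v ∈ coinvariants δ := by
  rw [mem_coinvariants, average, LinearMap.comp_apply, ← slice_map_id, ← hδ.apply,
    hK.slice_assoc_map_comul]

theorem IsLeftInvariant.eq_of_eqOn_coinvariants {μ ν : V →ₗ[k] k} (hμ : IsLeftInvariant δ μ)
    (hν : IsLeftInvariant δ ν) {K : A →ₗ[k] k} (hK : IsRightInvariant K) (hK1 : K 1 = 1)
    (hδ : IsCoassociative δ) (h : Set.EqOn μ ν (coinvariants δ)) : μ = ν := by
  ext v
  rw [← hμ.apply_average hK1, h (hK.average_mem_coinvariants hδ v), hν.apply_average hK1]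

end Invariant

theorem eq_smul_of_tmul_eq_tmul {k V : Type*} [CommSemiring k] [AddCommMonoid V] [Module k V]
    {f : V →ₗ[k] k} {v e : V} (hf : f e = 1) (h : v ⊗ₜ[k] e = e ⊗ₜ v) : v = f v • e := by
  simpa [hf] using congr(TensorProduct.rid k V (TensorProduct.map LinearMap.id f $h))

section Galois

variable {k A Z : Type*} [CommSemiring k] [Semiring A] [Algebra k A] [Semiring Z] [Algebra k Z]

/-- The Galois map `z ⊗ z' ↦ δ(z) (1 ⊗ z')` of a left coaction `δ` on an algebra. -/
def galoisMap (δ : Z →ₗ[k] A ⊗[k] Z) : Z ⊗[k] Z →ₗ[k] A ⊗[k] Z :=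
  TensorProduct.map LinearMap.id (LinearMap.mul' k Z) ∘ₗ
    (TensorProduct.assoc k A Z Z).toLinearMap ∘ₗ TensorProduct.map δ LinearMap.id

theorem coinvariants_le_span_one {δ : Z →ₗ[k] A ⊗[k] Z} (hone : 1 ∈ coinvariants δ)
    {f : Z →ₗ[k] k} (hf : f 1 = 1) (hinj : Function.Injective (galoisMap δ)) :
    coinvariants δ ≤ Submodule.span k {1} := by
  intro z hz
  have h : z ⊗ₜ[k] (1 : Z) = 1 ⊗ₜ z :=
    hinj (by simp [galoisMap, mem_coinvariants.1 hone, mem_coinvariants.1 hz])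
  exact Submodule.mem_span_singleton.2 ⟨f z, (eq_smul_of_tmul_eq_tmul hf h).symm⟩

end Galois

end HopfGalois

open HopfGalois in
theorem Galois_extension_haar_measure_exists_unique_general
    {k A V : Type*} [CommSemiring k] [Semiring A] [HopfAlgebra k A] [AddCommMonoid V] [Module k V]
    {J : A →ₗ[k] k} (hJ1 : J 1 = 1) (hJ : IsLeftInvariant Coalgebra.comul J)
    {δ : V →ₗ[k] A ⊗[k] V} (hδ : IsCoassociative δ) {e : V} (he : e ∈ coinvariants δ)
    (hsplit : ∃ f : V →ₗ[k] k, f e = 1) (hcoinv : coinvariants δ ≤ Submodule.span k {e}) :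
    ∃! μ : V →ₗ[k] k, μ e = 1 ∧ IsLeftInvariant δ μ := by
  obtain ⟨f, hf⟩ := hsplit
  have hμ : IsLeftInvariant δ (f ∘ₗ average δ J) := hJ.comp_average hδ f
  have hμe : f (average δ J e) = 1 := by simp [average_of_mem_coinvariants he, hJ1, hf]
  refine ⟨f ∘ₗ average δ J, ⟨hμe, hμ⟩, fun ν ⟨hνe, hν⟩ ↦ ?_⟩
  refine hν.eq_of_eqOn_coinvariants hμ hJ.comp_antipode (by simp [hJ1]) hδ fun v hv ↦ ?_
  obtain ⟨c, rfl⟩ := Submodule.mem_span_singleton.1 (hcoinv hv)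
  simp [hμe, hνe]

/-- Let `A` be a Hopf algebra over a field `k` admitting a Haar measure
`J : A → k` (i.e. `J(1) = 1` and `(id_A ⊗ J) ∘ Δ = u_A ∘ J`), and let `Z` be an
`A`-Galois extension of `k`. Then there is a unique Haar measure on `Z`: a unique
linear map `μ : Z → k` with `μ(1) = 1` and `(id_A ⊗ μ) ∘ α_Z = u_A ∘ μ`. -/
theorem Galois_extension_haar_measure_exists_unique
    (k : Type) [Field k]
    (A : Type) [Ring A] [HopfAlgebra k A]
    (J : A →ₗ[k] k) (hJ1 : J 1 = 1)
    (hJinv : ∀ a : A,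
      (TensorProduct.rid k A)
          (TensorProduct.map (LinearMap.id (M := A)) J (Coalgebra.comul (R := k) a)) =
        algebraMap k A (J a))
    (Z : Type) [Ring Z] [Algebra k Z] [Nontrivial Z]
    (αZ : Z →ₐ[k] A ⊗[k] Z)
    -- coassociativity: `(Δ ⊗ id) ∘ α_Z = (id ⊗ α_Z) ∘ α_Z`
    (hcoassoc :
      (TensorProduct.assoc k A A Z).toLinearMap ∘ₗ
          (TensorProduct.map (Coalgebra.comul (R := k) (A := A)) (LinearMap.id (M := Z))) ∘ₗ
          αZ.toLinearMap =
        (TensorProduct.map (LinearMap.id (M := A)) αZ.toLinearMap) ∘ₗ αZ.toLinearMap)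
    -- counit axiom: `(ε ⊗ id) ∘ α_Z = id`
    (hcounit :
      (TensorProduct.lid k Z).toLinearMap ∘ₗ
          (TensorProduct.map (Coalgebra.counit (R := k) (A := A)) (LinearMap.id (M := Z))) ∘ₗ
          αZ.toLinearMap =
        LinearMap.id)
    -- the Galois map `(id_A ⊗ m_Z) ∘ (α_Z ⊗ id_Z)` is bijective
    (hGalois :
      Function.Bijective
        ((TensorProduct.map LinearMap.id (LinearMap.mul' k Z)) ∘ₗ
          (TensorProduct.assoc k A Z Z).toLinearMap ∘ₗ
          (TensorProduct.map αZ.toLinearMap LinearMap.id))) :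
    ∃! μ : Z →ₗ[k] k,
      μ 1 = 1 ∧
      ∀ z : Z,
        (TensorProduct.rid k A)
            (TensorProduct.map (LinearMap.id (M := A)) μ (αZ z)) =
          algebraMap k A (μ z) := by
  obtain ⟨f, hf⟩ := Module.Projective.exists_dual_eq_one k (one_ne_zero (α := Z))
  have hone : 1 ∈ HopfGalois.coinvariants αZ.toLinearMap := map_one αZ
  exact Galois_extension_haar_measure_exists_unique_general hJ1 hJinv hcoassoc hone ⟨f, hf⟩
    (HopfGalois.coinvariants_le_span_one hone hf hGalois.injective)
end

section
/- Let A be a Hopf *-algebra over ℂ admitting a Haar measure J : A → ℂ that is positive and faithful (J(a*a) ≥ 0 for all a, and J(a*a) > 0 whenever a ≠ 0). Let Z be an A-*-Galois extension, and assume there exists a linear map ψ : Z → ℂ with ψ(z*z) ≥ 0 for all z ∈ Z and ψ(1_Z) = 1. Then there exists a positive Haar measure on Z, i.e. a Haar measure μ : Z → ℂ with μ(z*z) ≥ 0 for all z ∈ Z. -/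
open TensorProduct ComplexOrder

/-!
The Haar measure on `Z` is `μ = (J ⊗ ψ) ∘ α`. It factors as `J ∘ T` through the coefficient map
`T = (id ⊗ ψ) ∘ α : Z → A`; coassociativity makes `T` a comodule map, so `μ` inherits invariance
from `J`. It is positive because `α` is a *-homomorphism and, by the Schur product theorem,
`J ⊗ ψ` is positive on `A ⊗ Z`. Conjugate-linearity of the stars is recovered beforehand: the star
on `A ⊗ Z` forces `star (c • 1) ⊗ 1 = 1 ⊗ star (c • 1)`, so the stars preserve scalars, and
positivity of `J` and `ψ` leaves complex conjugation as the only possible action on them.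
-/

section Slice

variable {R M N P Z : Type*} [CommSemiring R]
  [AddCommMonoid M] [Module R M] [AddCommMonoid N] [Module R N]
  [AddCommMonoid P] [Module R P] [AddCommMonoid Z] [Module R Z]

variable (M) in
/-- The slice map `id ⊗ ψ : M ⊗ Z → M` of a linear functional `ψ` on `Z`. -/
noncomputable def rightSlice (ψ : Z →ₗ[R] R) : M ⊗[R] Z →ₗ[R] M :=
  (TensorProduct.rid R M).toLinearMap ∘ₗ ψ.lTensor M

@[simp]
theorem rightSlice_tmul (ψ : Z →ₗ[R] R) (m : M) (z : Z) :
    rightSlice M ψ (m ⊗ₜ z) = ψ z • m := by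
  simp [rightSlice]

theorem rightSlice_comp (ψ : P →ₗ[R] R) (f : Z →ₗ[R] P) :
    rightSlice M (ψ ∘ₗ f) = rightSlice M ψ ∘ₗ f.lTensor M := by
  ext; simp

theorem rightSlice_comp_rTensor (ψ : Z →ₗ[R] R) (f : M →ₗ[R] N) :
    rightSlice N ψ ∘ₗ f.rTensor Z = f ∘ₗ rightSlice M ψ := by
  ext; simp

theorem lTensor_rightSlice_comp_assoc (ψ : Z →ₗ[R] R) :
    (rightSlice N ψ).lTensor M ∘ₗ (TensorProduct.assoc R M N Z).toLinearMap =
      rightSlice (M ⊗[R] N) ψ :=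
  TensorProduct.ext_threefold fun m n z => by simp

end Slice

section Coinvariant

variable {R A M N : Type*} [CommSemiring R] [Semiring A] [Algebra R A]
  [AddCommMonoid M] [Module R M] [AddCommMonoid N] [Module R N]

/-- Invariance of a functional `μ` on `M` under a coaction `ρ : M → A ⊗ M`, that is,
`(id ⊗ μ) (ρ m) = μ m • 1`. A Haar measure is an invariant functional with `μ 1 = 1`. -/
def IsCoinvariant (ρ : M →ₗ[R] A ⊗[R] M) (μ : M →ₗ[R] R) : Prop :=
  ∀ m, rightSlice A μ (ρ m) = algebraMap R A (μ m)

theorem IsCoinvariant.comp {ρ : M →ₗ[R] A ⊗[R] M} {σ : N →ₗ[R] A ⊗[R] N} {μ : N →ₗ[R] R}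
    (hμ : IsCoinvariant σ μ) {f : M →ₗ[R] N} (hf : σ ∘ₗ f = f.lTensor A ∘ₗ ρ) :
    IsCoinvariant ρ (μ ∘ₗ f) := fun m =>
  calc
    rightSlice A (μ ∘ₗ f) (ρ m) = rightSlice A μ ((f.lTensor A ∘ₗ ρ) m) := by
      rw [rightSlice_comp]; rfl
    _ = rightSlice A μ (σ (f m)) := by rw [← hf]; rfl
    _ = algebraMap R A ((μ ∘ₗ f) m) := hμ (f m)

end Coinvariant

section CoefficientMap

variable {R A Z : Type*} [CommSemiring R] [AddCommMonoid A] [Module R A]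
  [AddCommMonoid Z] [Module R Z]

/-- The map `z ↦ (id ⊗ ψ) (α z)` sending a vector of a comodule `Z` to its matrix coefficient
against the functional `ψ`. -/
noncomputable def coefficientMap (α : Z →ₗ[R] A ⊗[R] Z) (ψ : Z →ₗ[R] R) : Z →ₗ[R] A :=
  rightSlice A ψ ∘ₗ α

theorem comul_comp_coefficientMap [CoalgebraStruct R A] {α : Z →ₗ[R] A ⊗[R] Z}
    (hα : (TensorProduct.assoc R A A Z).toLinearMap ∘ₗ CoalgebraStruct.comul.rTensor Z ∘ₗ α =
      α.lTensor A ∘ₗ α) (ψ : Z →ₗ[R] R) :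
    CoalgebraStruct.comul ∘ₗ coefficientMap α ψ = (coefficientMap α ψ).lTensor A ∘ₗ α :=
  calc
    CoalgebraStruct.comul ∘ₗ rightSlice A ψ ∘ₗ α =
        rightSlice (A ⊗[R] A) ψ ∘ₗ CoalgebraStruct.comul.rTensor Z ∘ₗ α := by
      rw [← LinearMap.comp_assoc, ← rightSlice_comp_rTensor, LinearMap.comp_assoc]
    _ = (rightSlice A ψ).lTensor A ∘ₗ α.lTensor A ∘ₗ α := by
      rw [← lTensor_rightSlice_comp_assoc, LinearMap.comp_assoc, hα]
    _ = (rightSlice A ψ ∘ₗ α).lTensor A ∘ₗ α := by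
      rw [LinearMap.lTensor_comp, LinearMap.comp_assoc]

end CoefficientMap

section StarPositive

/-- Positivity of a linear functional on a complex *-algebra: it is nonnegative on all
`star b * b`. The star is not required to be conjugate-linear. -/
def IsStarPositive {B : Type*} [Ring B] [Algebra ℂ B] [StarRing B] (f : B →ₗ[ℂ] ℂ) : Prop :=
  ∀ b, 0 ≤ f (star b * b)

theorem eq_star_of_forall_im_apply_mul_self_eq_zero (σ : ℂ →+ ℂ) (h_one : σ 1 = 1)
    (im_eq_zero : ∀ c, (σ c * c).im = 0) (c : ℂ) : σ c = star c := by
  -- Polarize at `d + 1` for the imaginary part of `σ d`, then at `c + I` for the real part.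
  have him (d : ℂ) : (σ d).im = -d.im := by
    have h := im_eq_zero d
    have h' := im_eq_zero (d + 1)
    simp only [map_add, h_one, Complex.mul_im, Complex.add_re, Complex.add_im, Complex.one_re,
      Complex.one_im] at h h'
    linarith
  have hI : σ Complex.I = -Complex.I :=
    Complex.ext (by simpa using im_eq_zero Complex.I) (by simpa using him Complex.I)
  have hre : (σ c).re = c.re := by
    have h := im_eq_zero c
    have h' := im_eq_zero (c + Complex.I)
    simp only [map_add, hI, Complex.mul_im, Complex.add_re, Complex.add_im, Complex.neg_re,
      Complex.neg_im, Complex.I_re, Complex.I_im] at h h'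
    linarith
  exact Complex.ext hre (him c)

variable {B C : Type*} [Ring B] [Algebra ℂ B] [StarRing B] [Ring C] [Algebra ℂ C] [StarRing C]
  {f : B →ₗ[ℂ] ℂ} {g : C →ₗ[ℂ] ℂ}

theorem IsStarPositive.starModule (hf : IsStarPositive f) (hf_one : f 1 = 1)
    (hscalar : ∀ c, star (algebraMap ℂ B c) ∈ (⊥ : Subalgebra ℂ B)) : StarModule ℂ B := by
  have hf_algebraMap (c : ℂ) : f (algebraMap ℂ B c) = c := by
    simp [Algebra.algebraMap_eq_smul_one, hf_one]
  let σ : ℂ →+ ℂ :=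
    f.toAddMonoidHom.comp (starAddEquiv.toAddMonoidHom.comp (algebraMap ℂ B).toAddMonoidHom)
  have star_algebraMap_eq_σ (c : ℂ) : star (algebraMap ℂ B c) = algebraMap ℂ B (σ c) := by
    obtain ⟨d, hd⟩ := Algebra.mem_bot.1 (hscalar c)
    have hσ : σ c = d := (congrArg f hd.symm).trans (hf_algebraMap d)
    rw [hσ, hd]
  have hσ_real (c : ℂ) : (σ c * c).im = 0 := by
    have h := hf (algebraMap ℂ B c)
    rw [star_algebraMap_eq_σ, ← map_mul, hf_algebraMap] at h
    exact (Complex.le_def.1 h).2.symm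
  have hσ_one : σ 1 = 1 := by simp [σ, hf_one]
  have star_algebraMap (c : ℂ) : star (algebraMap ℂ B c) = algebraMap ℂ B (star c) := by
    rw [star_algebraMap_eq_σ, eq_star_of_forall_im_apply_mul_self_eq_zero σ hσ_one hσ_real]
  exact ⟨fun c b => by
    rw [Algebra.smul_def, star_mul, star_algebraMap, Algebra.smul_def, Algebra.commutes]⟩

variable [StarModule ℂ B] [StarModule ℂ C]

theorem IsStarPositive.map_star (hf : IsStarPositive f) (b : B) : f (star b) = star (f b) := by
  have im_eq_zero (a : B) : (f (star a * a)).im = 0 := (Complex.le_def.1 (hf a)).2.symm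
  have h_one : (f 1).im = 0 := by simpa using im_eq_zero 1
  have expand_add_one : f (star (b + 1) * (b + 1)) = f (star b * b) + f b + f (star b) + f 1 := by
    simp only [star_add, star_one, mul_add, add_mul, one_mul, mul_one, map_add]
    ring
  have expand_add_I : f (star (b + Complex.I • 1) * (b + Complex.I • 1)) =
      f (star b * b) + Complex.I * (f (star b) - f b) + f 1 := by
    simp only [star_add, star_smul, RCLike.star_def, Complex.conj_I, star_one, neg_smul, mul_add,
      add_mul, neg_mul, Algebra.smul_mul_assoc, one_mul, Algebra.mul_smul_comm, mul_one, smul_add,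
      smul_neg, map_add, map_neg, map_smul, smul_eq_mul, ← mul_assoc, Complex.I_mul_I, neg_neg]
    ring
  have him : (f b).im + (f (star b)).im = 0 := by
    have h := im_eq_zero (b + 1)
    rw [expand_add_one] at h
    simpa [im_eq_zero b, h_one] using h
  have hre : (f (star b)).re - (f b).re = 0 := by
    have h := im_eq_zero (b + Complex.I • 1)
    rw [expand_add_I] at h
    simpa [im_eq_zero b, h_one] using h
  exact Complex.ext (sub_eq_zero.1 hre) (eq_neg_of_add_eq_zero_right him)

theorem IsStarPositive.posSemidef {ι : Type*} [Finite ι] (hf : IsStarPositive f) (b : ι → B) :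
    (Matrix.of fun i j => f (star (b i) * b j)).PosSemidef := by
  cases nonempty_fintype ι
  refine Matrix.PosSemidef.of_dotProduct_mulVec_nonneg ?_ fun x => ?_
  · ext i j
    simp [← hf.map_star]
  · have quadratic_form : f (star (∑ i, x i • b i) * ∑ i, x i • b i) =
        ∑ i, ∑ j, star (x i) * (f (star (b i) * b j) * x j) := by
      rw [star_sum, Finset.sum_mul_sum]
      simp only [map_sum, star_smul, smul_mul_smul_comm, map_smul, smul_eq_mul]
      exact Finset.sum_congr rfl fun i _ => Finset.sum_congr rfl fun j _ => by ring
    have h := hf (∑ i, x i • b i)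
    rw [quadratic_form] at h
    simpa only [dotProduct, Matrix.mulVec, Matrix.of_apply, Finset.mul_sum, Pi.star_apply] using h

theorem IsStarPositive.comp_rightSlice (hf : IsStarPositive f) (hg : IsStarPositive g) :
    IsStarPositive (f ∘ₗ rightSlice B g) := by
  intro t
  obtain ⟨s, rfl⟩ := TensorProduct.exists_finset t
  have schur : 0 ≤ ∑ i : s, ∑ j : s,
      f (star i.1.1 * j.1.1) * g (star i.1.2 * j.1.2) := by
    simpa [dotProduct, Matrix.mulVec] using
      ((hf.posSemidef fun i : s => i.1.1).hadamard
        (hg.posSemidef fun i : s => i.1.2)).dotProduct_mulVec_nonneg 1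
  rw [← Finset.sum_coe_sort s, star_sum, Finset.sum_mul_sum]
  simpa [mul_comm] using schur

theorem IsStarPositive.comp_coefficientMap (hf : IsStarPositive f) (hg : IsStarPositive g)
    (α : C →ₐ[ℂ] B ⊗[ℂ] C) (hα : ∀ c, α (star c) = star (α c)) :
    IsStarPositive (f ∘ₗ coefficientMap α.toLinearMap g) := fun c => by
  have h := hf.comp_rightSlice hg (α c)
  rwa [← hα, ← map_mul] at h

end StarPositive

section TensorStar

variable {R A Z : Type*} [CommSemiring R] [Semiring A] [Algebra R A] [Semiring Z] [Algebra R Z]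

theorem mem_bot_of_tmul_one_eq_one_tmul {ψ : Z →ₗ[R] R} (hψ : ψ 1 = 1) {a : A} {z : Z}
    (h : a ⊗ₜ[R] (1 : Z) = (1 : A) ⊗ₜ[R] z) : a ∈ (⊥ : Subalgebra R A) := by
  have ha : a = ψ z • (1 : A) := by simpa [hψ] using congrArg (rightSlice A ψ) h
  exact Algebra.mem_bot.2 ⟨ψ z, by rw [ha, Algebra.algebraMap_eq_smul_one]⟩

theorem star_algebraMap_tmul_one [StarRing A] [StarRing Z] {S : A ⊗[R] Z → A ⊗[R] Z}
    (hS : ∀ a z, S (a ⊗ₜ z) = star a ⊗ₜ star z) (r : R) :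
    star (algebraMap R A r) ⊗ₜ[R] (1 : Z) = (1 : A) ⊗ₜ[R] star (algebraMap R Z r) :=
  calc
    star (algebraMap R A r) ⊗ₜ[R] (1 : Z) = S (algebraMap R A r ⊗ₜ 1) := by rw [hS, star_one]
    _ = S (1 ⊗ₜ algebraMap R Z r) := by
      rw [Algebra.algebraMap_eq_smul_one, Algebra.algebraMap_eq_smul_one, TensorProduct.smul_tmul]
    _ = (1 : A) ⊗ₜ[R] star (algebraMap R Z r) := by rw [hS, star_one]

theorem eq_star_of_forall_tmul [StarRing R] [StarRing A] [StarModule R A] [StarRing Z]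
    [StarModule R Z] {S : A ⊗[R] Z → A ⊗[R] Z} (hadd : ∀ u v, S (u + v) = S u + S v)
    (hS : ∀ a z, S (a ⊗ₜ z) = star a ⊗ₜ star z) (t : A ⊗[R] Z) : S t = star t := by
  induction t with
  | zero => simpa using hS 0 0
  | tmul a z => simp [hS]
  | add u v hu hv => rw [hadd, hu, hv, star_add]

end TensorStar

theorem star_Galois_extension_positive_haar_exists_general
    {A Z : Type*} [Ring A] [Algebra ℂ A] [CoalgebraStruct ℂ A] [StarRing A]
    [Ring Z] [Algebra ℂ Z] [StarRing Z]
    {J : A →ₗ[ℂ] ℂ} (hJ_one : J 1 = 1) (hJ_inv : IsCoinvariant CoalgebraStruct.comul J)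
    (hJ_pos : IsStarPositive J) (α : Z →ₐ[ℂ] A ⊗[ℂ] Z)
    (hcoassoc : (TensorProduct.assoc ℂ A A Z).toLinearMap ∘ₗ
      CoalgebraStruct.comul.rTensor Z ∘ₗ α.toLinearMap = α.toLinearMap.lTensor A ∘ₗ α.toLinearMap)
    {S : A ⊗[ℂ] Z → A ⊗[ℂ] Z} (hS_add : ∀ u v, S (u + v) = S u + S v)
    (hS_tmul : ∀ a z, S (a ⊗ₜ z) = star a ⊗ₜ star z) (hα_star : ∀ z, α (star z) = S (α z))
    {ψ : Z →ₗ[ℂ] ℂ} (hψ_pos : IsStarPositive ψ) (hψ_one : ψ 1 = 1) :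
    ∃ μ : Z →ₗ[ℂ] ℂ, μ 1 = 1 ∧ IsCoinvariant α.toLinearMap μ ∧ IsStarPositive μ := by
  have hscalar (c : ℂ) := star_algebraMap_tmul_one hS_tmul c
  have : StarModule ℂ A :=
    hJ_pos.starModule hJ_one fun c => mem_bot_of_tmul_one_eq_one_tmul hψ_one (hscalar c)
  have : StarModule ℂ Z := hψ_pos.starModule hψ_one fun c =>
    mem_bot_of_tmul_one_eq_one_tmul hJ_one
      (congrArg (TensorProduct.comm ℂ A Z) (hscalar c)).symm
  refine ⟨J ∘ₗ coefficientMap α.toLinearMap ψ, ?_,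
    hJ_inv.comp (comul_comp_coefficientMap hcoassoc ψ),
    hJ_pos.comp_coefficientMap hψ_pos α fun z => ?_⟩
  · simp [coefficientMap, Algebra.TensorProduct.one_def, hJ_one, hψ_one]
  · rw [hα_star, eq_star_of_forall_tmul hS_add hS_tmul]

/-- Let `A` be a Hopf *-algebra over `ℂ` (the comultiplication is a
*-homomorphism, where the star on `A ⊗ A` is `(a ⊗ b)* = a* ⊗ b*`) admitting a
positive faithful Haar measure `J`.  Let `Z` be an `A`-*-Galois extension and
assume there is a linear map `ψ : Z → ℂ` with `ψ(z*z) ≥ 0` for all `z` and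
`ψ(1) = 1`.  Then there exists a positive Haar measure on `Z`. -/
theorem star_Galois_extension_positive_haar_exists
    (A : Type) [Ring A] [HopfAlgebra ℂ A] [StarRing A]
    -- the star on `A ⊗ A`, as the (unique) additive map with `(a ⊗ b)* = a* ⊗ b*`
    (SA : A ⊗[ℂ] A → A ⊗[ℂ] A)
    (hSAadd : ∀ u v, SA (u + v) = SA u + SA v)
    (hSAtmul : ∀ a b : A, SA (a ⊗ₜ[ℂ] b) = star a ⊗ₜ[ℂ] star b)
    -- the comultiplication is a *-homomorphism
    (hcomul_star : ∀ a : A,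
      Coalgebra.comul (R := ℂ) (star a) = SA (Coalgebra.comul (R := ℂ) a))
    -- a positive faithful Haar measure on `A`
    (J : A →ₗ[ℂ] ℂ) (hJ1 : J 1 = 1)
    (hJinv : ∀ a : A,
      (TensorProduct.rid ℂ A)
          (TensorProduct.map (LinearMap.id (M := A)) J (Coalgebra.comul (R := ℂ) a)) =
        algebraMap ℂ A (J a))
    (hJpos : ∀ a : A, 0 ≤ J (star a * a))
    (hJfaithful : ∀ a : A, a ≠ 0 → 0 < J (star a * a))
    -- `Z` is an `A`-*-Galois extension
    (Z : Type) [Ring Z] [Algebra ℂ Z] [StarRing Z] [Nontrivial Z]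
    (αZ : Z →ₐ[ℂ] A ⊗[ℂ] Z)
    (hcoassoc :
      (TensorProduct.assoc ℂ A A Z).toLinearMap ∘ₗ
          (TensorProduct.map (Coalgebra.comul (R := ℂ) (A := A)) (LinearMap.id (M := Z))) ∘ₗ
          αZ.toLinearMap =
        (TensorProduct.map (LinearMap.id (M := A)) αZ.toLinearMap) ∘ₗ αZ.toLinearMap)
    (hcounit :
      (TensorProduct.lid ℂ Z).toLinearMap ∘ₗ
          (TensorProduct.map (Coalgebra.counit (R := ℂ) (A := A)) (LinearMap.id (M := Z))) ∘ₗ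
          αZ.toLinearMap =
        LinearMap.id)
    (hGalois :
      Function.Bijective
        ((TensorProduct.map LinearMap.id (LinearMap.mul' ℂ Z)) ∘ₗ
          (TensorProduct.assoc ℂ A Z Z).toLinearMap ∘ₗ
          (TensorProduct.map αZ.toLinearMap LinearMap.id)))
    -- the star on `A ⊗ Z`, and `α_Z` is a *-homomorphism
    (SZ : A ⊗[ℂ] Z → A ⊗[ℂ] Z)
    (hSZadd : ∀ u v, SZ (u + v) = SZ u + SZ v)
    (hSZtmul : ∀ (a : A) (z : Z), SZ (a ⊗ₜ[ℂ] z) = star a ⊗ₜ[ℂ] star z)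
    (hαZstar : ∀ z : Z, αZ (star z) = SZ (αZ z))
    -- a positive normalized linear functional on `Z`
    (ψ : Z →ₗ[ℂ] ℂ) (hψpos : ∀ z : Z, 0 ≤ ψ (star z * z)) (hψ1 : ψ 1 = 1) :
    ∃ μ : Z →ₗ[ℂ] ℂ,
      μ 1 = 1 ∧
      (∀ z : Z,
        (TensorProduct.rid ℂ A)
            (TensorProduct.map (LinearMap.id (M := A)) μ (αZ z)) =
          algebraMap ℂ A (μ z)) ∧
      ∀ z : Z, 0 ≤ μ (star z * z) :=
  star_Galois_extension_positive_haar_exists_general hJ1 hJinv hJpos αZ hcoassoc hSZadd hSZtmul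
    hαZstar hψpos hψ1
end

section
/- Let A be a Hopf *-algebra over ℂ admitting a Haar measure J : A → ℂ that is positive and faithful (J(a*a) ≥ 0 for all a, and J(a*a) > 0 whenever a ≠ 0) [equivalently, A is a unitarizable Hopf *-algebra]. Let Z be an A-*-Galois extension and let μ be a positive Haar measure on Z (μ(z*z) ≥ 0 for all z). Then μ is faithful: μ(z*z) > 0 for every nonzero z ∈ Z. -/
open TensorProduct ComplexOrder

/-!
Let `N` be the set of all `n : Z` with `μ (w * n) = 0` for every `w`. By the Cauchy–Schwarz
inequality it contains every `z` with `μ (star z * z) = 0`, so it suffices to show `N = 0`, and this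
part needs no star. Strong left invariance
`(id ⊗ μ) ((1 ⊗ w) * α z) = S ((id ⊗ μ) (α w * (1 ⊗ z)))` shows that the left ideal `N` satisfies
`α N ⊆ A ⊗ N`. The Galois map `x ⊗ y ↦ α x * (1 ⊗ y)` sends `Z ⊗ N` onto `A ⊗ N`, which contains
`α z`, the image of `z ⊗ 1`, for `z ∈ N`. By injectivity `z ⊗ 1 ∈ Z ⊗ N`, and applying `id ⊗ μ`
gives `z = 0`.
-/

open scoped ComplexConjugate

section PositiveFunctional

variable {Z : Type*} [Ring Z] [Algebra ℂ Z] [StarRing Z] [StarModule ℂ Z] {μ : Z →ₗ[ℂ] ℂ}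

lemma map_star_eq_conj_of_nonneg (hμ : ∀ z, 0 ≤ μ (star z * z)) (z : Z) :
    μ (star z) = conj (μ z) := by
  have im_eq_zero (x : Z) : (μ (star x * x)).im = 0 := (Complex.nonneg_iff.1 (hμ x)).2.symm
  have im_add_im_eq_zero (x : Z) : (μ x).im + (μ (star x)).im = 0 := by
    have h := im_eq_zero (1 + x)
    have hx := im_eq_zero x
    have h1 := im_eq_zero 1
    simp only [star_add, star_one, mul_add, add_mul, mul_one, one_mul, map_add,
      Complex.add_im] at h h1
    linarith
  have re_eq : (μ (star z)).re = (μ z).re := by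
    have h := im_add_im_eq_zero (Complex.I • z)
    simp only [star_smul, Complex.star_def, Complex.conj_I, map_smul, smul_eq_mul, Complex.mul_im,
      Complex.neg_re, Complex.neg_im, Complex.I_re, Complex.I_im] at h
    linarith
  apply Complex.ext
  · rw [Complex.conj_re, re_eq]
  · rw [Complex.conj_im, eq_neg_of_add_eq_zero_right (im_add_im_eq_zero z)]

/-- The semidefinite inner product `⟪x, y⟫ = μ (star x * y)` of a positive functional `μ` (the first
step of the GNS construction), through which Mathlib's Cauchy–Schwarz inequality applies. -/
abbrev preInnerProductSpaceCoreOfNonneg (hμ : ∀ z, 0 ≤ μ (star z * z)) :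
    PreInnerProductSpace.Core ℂ Z where
  inner x y := μ (star x * y)
  conj_inner_symm x y := by rw [← map_star_eq_conj_of_nonneg hμ, star_mul, star_star]
  re_inner_nonneg x := (Complex.nonneg_iff.1 (hμ x)).1
  add_left x y z := by rw [star_add, add_mul, map_add]
  smul_left x y r := by
    rw [star_smul, smul_mul_assoc, map_smul, smul_eq_mul, Complex.star_def]

lemma map_mul_eq_zero_of_map_star_mul_self_eq_zero (hμ : ∀ z, 0 ≤ μ (star z * z)) {z : Z}
    (hz : μ (star z * z) = 0) (w : Z) : μ (w * z) = 0 := by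
  have cauchy_schwarz : ‖μ (star (star w) * z)‖ * ‖μ (star z * star w)‖ ≤
      (μ (star (star w) * star w)).re * (μ (star z * z)).re :=
    InnerProductSpace.Core.inner_mul_inner_self_le
      (c := preInnerProductSpaceCoreOfNonneg hμ) (star w) z
  rw [star_star, ← star_mul, map_star_eq_conj_of_nonneg hμ, Complex.norm_conj, hz, Complex.zero_re,
    mul_zero] at cauchy_schwarz
  exact norm_eq_zero.1 (mul_self_eq_zero.1 (cauchy_schwarz.antisymm (mul_self_nonneg _)))

end PositiveFunctional

section StarModule

lemma eq_conj_of_map_mul_self_nonneg (σ : ℂ →+ ℂ) (hσ1 : σ 1 = 1) (hσ : ∀ c, 0 ≤ σ c * c) (c : ℂ) :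
    σ c = conj c := by
  have im_eq_zero (d : ℂ) : (σ d * d).im = 0 := (Complex.nonneg_iff.1 (hσ d)).2.symm
  have im_add_im_eq_zero (d : ℂ) : (σ d).im + d.im = 0 := by
    have h := im_eq_zero (d + 1)
    have hd := im_eq_zero d
    simp only [map_add, hσ1, Complex.mul_im, Complex.add_re, Complex.add_im, Complex.one_re,
      Complex.one_im] at h hd
    linarith
  have map_I : σ Complex.I = -Complex.I := by
    have hre := im_eq_zero Complex.I
    have him := im_add_im_eq_zero Complex.I
    simp only [Complex.mul_im, Complex.I_re, Complex.I_im, mul_one, mul_zero, add_zero] at hre him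
    apply Complex.ext
    · simpa using hre
    · simpa using eq_neg_of_add_eq_zero_left him
  have re_eq : (σ c).re = c.re := by
    have h := im_eq_zero (c + Complex.I)
    have hc := im_eq_zero c
    simp only [map_add, map_I, Complex.mul_im, Complex.add_re, Complex.add_im, Complex.neg_re,
      Complex.neg_im, Complex.I_re, Complex.I_im] at h hc
    linarith
  apply Complex.ext
  · simpa using re_eq
  · simpa using eq_neg_of_add_eq_zero_left (im_add_im_eq_zero c)

lemma star_smul_one_of_star_tmul {R A Z : Type*} [CommSemiring R] [Semiring A] [Module R A]
    [StarMul A] [Semiring Z] [Module R Z] [StarMul Z] {S : A ⊗[R] Z → A ⊗[R] Z}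
    (hS : ∀ (a : A) (z : Z), S (a ⊗ₜ[R] z) = star a ⊗ₜ[R] star z)
    {φ : A →ₗ[R] R} (hφ : φ 1 = 1) (c : R) :
    star (c • (1 : Z)) = φ (star (c • (1 : A))) • (1 : Z) := by
  have star_tmul : (1 : A) ⊗ₜ[R] star (c • (1 : Z)) = star (c • (1 : A)) ⊗ₜ[R] (1 : Z) := by
    rw [← star_one A, ← hS, ← TensorProduct.smul_tmul, hS, star_one, star_one]
  simpa [hφ] using congrArg (TensorProduct.lid R Z ∘ φ.rTensor Z) star_tmul

/-- Since scalars move across `⊗`, a star on `A ⊗ Z` makes `star (c • 1) = σ c • 1` in `Z` for some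
additive `σ`. Positivity of `μ` then rules out every `σ` but conjugation, such as the identity. -/
lemma starModule_of_star_tmul {A Z : Type*} [Semiring A] [Module ℂ A] [StarRing A]
    [Ring Z] [Algebra ℂ Z] [StarRing Z] {S : A ⊗[ℂ] Z → A ⊗[ℂ] Z}
    (hS : ∀ (a : A) (z : Z), S (a ⊗ₜ[ℂ] z) = star a ⊗ₜ[ℂ] star z)
    {φ : A →ₗ[ℂ] ℂ} (hφ : φ 1 = 1)
    {μ : Z →ₗ[ℂ] ℂ} (hμ1 : μ 1 = 1) (hμ : ∀ z, 0 ≤ μ (star z * z)) :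
    StarModule ℂ Z := by
  let σ : ℂ →+ ℂ := φ.toAddMonoidHom.comp
    ((starAddEquiv (R := A)).toAddMonoidHom.comp (LinearMap.toSpanSingleton ℂ A 1).toAddMonoidHom)
  have star_smul_one (c : ℂ) : star (c • (1 : Z)) = σ c • 1 := star_smul_one_of_star_tmul hS hφ c
  have σ_eq_conj : ∀ c, σ c = conj c := by
    refine eq_conj_of_map_mul_self_nonneg σ (by simp [σ, hφ]) fun c => ?_
    simpa [star_smul_one, hμ1, mul_comm] using hμ (c • 1)
  refine ⟨fun c z => ?_⟩
  calc star (c • z) = star z * star (c • (1 : Z)) := by rw [← star_mul, smul_one_mul]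
    _ = star c • star z := by rw [star_smul_one, σ_eq_conj, mul_smul_one, Complex.star_def]

end StarModule

section Slice

variable {R : Type*} [CommSemiring R]

/-- The slice map `id ⊗ μ : M ⊗ Z → M` of a functional `μ` on `Z`. -/
def slice (M : Type*) {Z : Type*} [AddCommMonoid M] [Module R M] [AddCommMonoid Z] [Module R Z]
    (μ : Z →ₗ[R] R) : M ⊗[R] Z →ₗ[R] M :=
  (TensorProduct.rid R M).toLinearMap ∘ₗ TensorProduct.map LinearMap.id μ

@[simp] lemma slice_tmul {M Z : Type*} [AddCommMonoid M] [Module R M] [AddCommMonoid Z] [Module R Z]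
    (μ : Z →ₗ[R] R) (m : M) (z : Z) : slice M μ (m ⊗ₜ[R] z) = μ z • m := by
  simp [slice]

variable {A Z : Type*} [Semiring A] [Algebra R A] [Semiring Z] [Algebra R Z]

lemma slice_tmul_one_mul (μ : Z →ₗ[R] R) (a : A) (u : A ⊗[R] Z) :
    slice A μ ((a ⊗ₜ[R] (1 : Z)) * u) = a * slice A μ u := by
  induction u with
  | zero => simp
  | tmul b x => simp
  | add u v hu hv => simp only [mul_add, map_add, hu, hv]

/-- The right radical `{n | ∀ w, μ (w * n) = 0}` of the form `(w, n) ↦ μ (w * n)`. It is in fact a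
left ideal; as an `R`-submodule it can be tensored with `A`. -/
def rightRadical (μ : Z →ₗ[R] R) : Submodule R Z :=
  LinearMap.ker ((LinearMap.mul R Z).compr₂ μ).flip

lemma mem_rightRadical {μ : Z →ₗ[R] R} {n : Z} : n ∈ rightRadical μ ↔ ∀ w, μ (w * n) = 0 := by
  simp [rightRadical, LinearMap.ext_iff]

lemma slice_mul_one_tmul_eq_zero {μ : Z →ₗ[R] R} {n : Z} (hn : n ∈ rightRadical μ)
    (u : A ⊗[R] Z) : slice A μ (u * ((1 : A) ⊗ₜ[R] n)) = 0 := by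
  induction u with
  | zero => simp
  | tmul a x => simp [mem_rightRadical.1 hn]
  | add u v hu hv => rw [add_mul, map_add, hu, hv, add_zero]

lemma repr_slice_one_tmul_mul {ι : Type*} [DecidableEq ι] (b : Module.Basis ι R A)
    (μ : Z →ₗ[R] R) (w : Z) (u : A ⊗[R] Z) (i : ι) :
    b.repr (slice A μ (((1 : A) ⊗ₜ[R] w) * u)) i =
      μ (w * TensorProduct.equivFinsuppOfBasisLeft b u i) := by
  induction u with
  | zero => simp
  | tmul a z => simp [mul_comm]
  | add u v hu hv => simp only [mul_add, map_add, Finsupp.add_apply, hu, hv]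

lemma mem_range_lTensor_rightRadical [Module.Free R A] {μ : Z →ₗ[R] R} {u : A ⊗[R] Z}
    (hu : ∀ w, slice A μ (((1 : A) ⊗ₜ[R] w) * u) = 0) :
    u ∈ LinearMap.range ((rightRadical μ).subtype.lTensor A) := by
  let b := Module.Free.chooseBasis R A
  classical
  let f := TensorProduct.equivFinsuppOfBasisLeft b u
  have coeff_mem (i) : f i ∈ rightRadical μ := mem_rightRadical.2 fun w => by
    rw [← repr_slice_one_tmul_mul, hu, map_zero, Finsupp.zero_apply]
  have u_eq : u = f.sum fun i z => b i ⊗ₜ[R] z := by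
    rw [← TensorProduct.equivFinsuppOfBasisLeft_symm_apply, LinearEquiv.symm_apply_apply]
  rw [u_eq]
  exact Submodule.sum_mem _ fun i _ => ⟨b i ⊗ₜ ⟨f i, coeff_mem i⟩, rfl⟩

end Slice

section GaloisMap

variable {R A Z : Type*} [CommSemiring R] [Semiring A] [Algebra R A] [Semiring Z] [Algebra R Z]

/-- The Galois (or canonical) map `x ⊗ y ↦ α x * (1 ⊗ y)`, whose bijectivity makes `Z` an
`A`-Galois extension. -/
def galoisMap (α : Z →ₐ[R] A ⊗[R] Z) : Z ⊗[R] Z →ₗ[R] A ⊗[R] Z :=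
  TensorProduct.map LinearMap.id (LinearMap.mul' R Z) ∘ₗ
    (TensorProduct.assoc R A Z Z).toLinearMap ∘ₗ TensorProduct.map α.toLinearMap LinearMap.id

lemma galoisMap_tmul (α : Z →ₐ[R] A ⊗[R] Z) (x y : Z) :
    galoisMap α (x ⊗ₜ[R] y) = α x * ((1 : A) ⊗ₜ[R] y) := by
  simp only [galoisMap, LinearMap.comp_apply, TensorProduct.map_tmul, LinearMap.id_apply,
    AlgHom.toLinearMap_apply, LinearEquiv.coe_coe]
  induction α x with
  | zero => simp
  | tmul a z => simp
  | add u v hu hv => simp only [map_add, TensorProduct.add_tmul, add_mul, hu, hv]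

lemma galoisMap_mul_one_tmul (α : Z →ₐ[R] A ⊗[R] Z) (t : Z ⊗[R] Z) (y : Z) :
    galoisMap α (t * ((1 : Z) ⊗ₜ[R] y)) = galoisMap α t * ((1 : A) ⊗ₜ[R] y) := by
  induction t with
  | zero => simp
  | tmul x z => simp [galoisMap_tmul, mul_assoc]
  | add u v hu hv => simp only [map_add, add_mul, hu, hv]

lemma exists_galoisMap_eq_and_slice_eq_zero {α : Z →ₐ[R] A ⊗[R] Z} {μ : Z →ₗ[R] R}
    (hsurj : Function.Surjective (galoisMap α))
    {u : A ⊗[R] Z} (hu : u ∈ LinearMap.range ((rightRadical μ).subtype.lTensor A)) :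
    ∃ t, galoisMap α t = u ∧ slice Z μ t = 0 := by
  obtain ⟨v, rfl⟩ := hu
  induction v with
  | zero => exact ⟨0, by simp⟩
  | tmul a n =>
    obtain ⟨t, ht⟩ := hsurj (a ⊗ₜ 1)
    exact ⟨t * (1 ⊗ₜ n.1), by simp [galoisMap_mul_one_tmul, ht],
      slice_mul_one_tmul_eq_zero n.2 t⟩
  | add v v' hv hv' =>
    obtain ⟨t, ht, ht0⟩ := hv
    obtain ⟨t', ht', ht0'⟩ := hv'
    exact ⟨t + t', by rw [map_add, map_add, ht, ht'], by rw [map_add, ht0, ht0', add_zero]⟩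

end GaloisMap

section AntipodeMul

variable (R A : Type*) [CommSemiring R] [Semiring A] [HopfAlgebra R A]

/-- The map `a ⊗ b ⊗ z ↦ S a * b ⊗ z`, which undoes one application of a coaction. -/
def antipodeMul (Z : Type*) [AddCommMonoid Z] [Module R Z] :
    A ⊗[R] (A ⊗[R] Z) →ₗ[R] A ⊗[R] Z :=
  (LinearMap.mul' R A ∘ₗ (HopfAlgebra.antipode R).rTensor A).rTensor Z ∘ₗ
    (TensorProduct.assoc R A A Z).symm.toLinearMap

variable {R A}

lemma antipodeMul_tmul {Z : Type*} [Semiring Z] [Algebra R Z] (a : A) (u : A ⊗[R] Z) :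
    antipodeMul R A Z (a ⊗ₜ[R] u) = (HopfAlgebra.antipode R a ⊗ₜ[R] (1 : Z)) * u := by
  induction u with
  | zero => simp
  | tmul b z => simp [antipodeMul]
  | add u v hu hv => simp only [TensorProduct.tmul_add, map_add, mul_add, hu, hv]

end AntipodeMul

section Coaction

variable {R A Z : Type*} [CommSemiring R] [Semiring A] [Semiring Z] [Algebra R Z]

/-- The algebra map `α` is a coassociative and counital left coaction, that is, it makes `Z` a left
`A`-comodule algebra. -/
structure IsCoaction [Bialgebra R A] (α : Z →ₐ[R] A ⊗[R] Z) : Prop where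
  coassoc : (TensorProduct.assoc R A A Z).toLinearMap ∘ₗ
    TensorProduct.map (Coalgebra.comul (R := R) (A := A)) (LinearMap.id (M := Z)) ∘ₗ
      α.toLinearMap =
    TensorProduct.map (LinearMap.id (M := A)) α.toLinearMap ∘ₗ α.toLinearMap
  counit : (TensorProduct.lid R Z).toLinearMap ∘ₗ
    TensorProduct.map (Coalgebra.counit (R := R) (A := A)) (LinearMap.id (M := Z)) ∘ₗ
      α.toLinearMap = LinearMap.id

/-- `μ` is a Haar measure for the coaction `α`: a normalised functional that is invariant,
`(id ⊗ μ) ∘ α = μ(·) 1`. No positivity is assumed. -/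
structure IsHaarMeasure [Algebra R A] (α : Z →ₐ[R] A ⊗[R] Z) (μ : Z →ₗ[R] R) : Prop where
  slice_coaction (z : Z) : slice A μ (α z) = algebraMap R A (μ z)
  map_one : μ 1 = 1

variable [HopfAlgebra R A] {α : Z →ₐ[R] A ⊗[R] Z} {μ : Z →ₗ[R] R}

lemma IsCoaction.antipodeMul_lTensor_coaction (hα : IsCoaction α) (w : Z) :
    antipodeMul R A Z (α.toLinearMap.lTensor A (α w)) = (1 : A) ⊗ₜ[R] w := by
  have coassoc : TensorProduct.assoc R A A Z (Coalgebra.comul.rTensor Z (α w)) =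
      α.toLinearMap.lTensor A (α w) := LinearMap.congr_fun hα.coassoc w
  have counit : Coalgebra.counit.rTensor Z (α w) = (1 : R) ⊗ₜ[R] w := by
    apply (TensorProduct.lid R Z).injective
    rw [TensorProduct.lid_tmul, one_smul]
    exact LinearMap.congr_fun hα.counit w
  calc antipodeMul R A Z (α.toLinearMap.lTensor A (α w))
      = (LinearMap.mul' R A ∘ₗ (HopfAlgebra.antipode R).rTensor A ∘ₗ Coalgebra.comul).rTensor Z
          (α w) := by
        simp only [antipodeMul, ← coassoc, LinearMap.comp_apply, LinearEquiv.coe_coe,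
          LinearEquiv.symm_apply_apply, LinearMap.rTensor_comp]
    _ = (Algebra.linearMap R A).rTensor Z (Coalgebra.counit.rTensor Z (α w)) := by
        rw [HopfAlgebra.mul_antipode_rTensor_comul, LinearMap.rTensor_comp_apply]
    _ = (1 : A) ⊗ₜ[R] w := by simp [counit]

lemma IsHaarMeasure.slice_antipodeMul_mul_coaction (hμ : IsHaarMeasure α μ) (u : A ⊗[R] Z)
    (z : Z) :
    slice A μ (antipodeMul R A Z (α.toLinearMap.lTensor A u) * α z) =
      HopfAlgebra.antipode R (slice A μ (u * ((1 : A) ⊗ₜ[R] z))) := by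
  induction u with
  | zero => simp
  | tmul a x =>
    rw [LinearMap.lTensor_tmul, antipodeMul_tmul, AlgHom.toLinearMap_apply, mul_assoc,
      slice_tmul_one_mul, ← map_mul, hμ.slice_coaction]
    simp [Algebra.algebraMap_eq_smul_one]
  | add u v hu hv => simp only [map_add, add_mul, hu, hv]

lemma IsHaarMeasure.slice_one_tmul_mul_coaction (hα : IsCoaction α)
    (hμ : IsHaarMeasure α μ) (w z : Z) :
    slice A μ (((1 : A) ⊗ₜ[R] w) * α z) =
      HopfAlgebra.antipode R (slice A μ (α w * ((1 : A) ⊗ₜ[R] z))) := by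
  rw [← hα.antipodeMul_lTensor_coaction, hμ.slice_antipodeMul_mul_coaction]

lemma IsHaarMeasure.coaction_mem_range_lTensor_rightRadical [Module.Free R A] (hα : IsCoaction α)
    (hμ : IsHaarMeasure α μ) {z : Z} (hz : z ∈ rightRadical μ) :
    α z ∈ LinearMap.range ((rightRadical μ).subtype.lTensor A) :=
  mem_range_lTensor_rightRadical fun w => by
    rw [hμ.slice_one_tmul_mul_coaction hα, slice_mul_one_tmul_eq_zero hz, map_zero]

theorem IsHaarMeasure.rightRadical_eq_bot [Module.Free R A] (hα : IsCoaction α)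
    (hGalois : Function.Bijective (galoisMap α)) (hμ : IsHaarMeasure α μ) :
    rightRadical μ = ⊥ := by
  refine (Submodule.eq_bot_iff _).2 fun z hz => ?_
  obtain ⟨t, ht, ht0⟩ := exists_galoisMap_eq_and_slice_eq_zero hGalois.surjective
    (hμ.coaction_mem_range_lTensor_rightRadical hα hz)
  have t_eq : t = z ⊗ₜ[R] (1 : Z) := hGalois.injective <| by
    rw [ht, galoisMap_tmul, ← Algebra.TensorProduct.one_def, mul_one]
  rwa [t_eq, slice_tmul, hμ.map_one, one_smul] at ht0

end Coaction

theorem star_Galois_extension_positive_haar_is_faithful_general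
    {A Z : Type*} [Ring A] [HopfAlgebra ℂ A] [Ring Z] [Algebra ℂ Z] [StarRing Z] [StarModule ℂ Z]
    {α : Z →ₐ[ℂ] A ⊗[ℂ] Z} (hα : IsCoaction α) (hGalois : Function.Bijective (galoisMap α))
    {μ : Z →ₗ[ℂ] ℂ} (hμ : IsHaarMeasure α μ) (hμpos : ∀ z, 0 ≤ μ (star z * z))
    {z : Z} (hz : z ≠ 0) : 0 < μ (star z * z) := by
  refine (hμpos z).lt_of_ne' fun h => hz ?_
  have mem_radical : z ∈ rightRadical μ :=
    mem_rightRadical.2 (map_mul_eq_zero_of_map_star_mul_self_eq_zero hμpos h)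
  rwa [hμ.rightRadical_eq_bot hα hGalois, Submodule.mem_bot] at mem_radical

/-- Let `A` be a Hopf *-algebra over `ℂ` (the comultiplication is a
*-homomorphism, where the star on `A ⊗ A` is `(a ⊗ b)* = a* ⊗ b*`) admitting a
positive faithful Haar measure `J`.  Let `Z` be an `A`-*-Galois extension and
let `μ` be a positive Haar measure on `Z`.  Then `μ` is faithful:
`μ(z*z) > 0` for every nonzero `z ∈ Z`. -/
theorem star_Galois_extension_positive_haar_is_faithful
    (A : Type) [Ring A] [HopfAlgebra ℂ A] [StarRing A]
    -- the star on `A ⊗ A`, as the (unique) additive map with `(a ⊗ b)* = a* ⊗ b*`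
    (SA : A ⊗[ℂ] A → A ⊗[ℂ] A)
    (hSAadd : ∀ u v, SA (u + v) = SA u + SA v)
    (hSAtmul : ∀ a b : A, SA (a ⊗ₜ[ℂ] b) = star a ⊗ₜ[ℂ] star b)
    -- the comultiplication is a *-homomorphism
    (hcomul_star : ∀ a : A,
      Coalgebra.comul (R := ℂ) (star a) = SA (Coalgebra.comul (R := ℂ) a))
    -- a positive faithful Haar measure on `A`
    (J : A →ₗ[ℂ] ℂ) (hJ1 : J 1 = 1)
    (hJinv : ∀ a : A,
      (TensorProduct.rid ℂ A)
          (TensorProduct.map (LinearMap.id (M := A)) J (Coalgebra.comul (R := ℂ) a)) =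
        algebraMap ℂ A (J a))
    (hJpos : ∀ a : A, 0 ≤ J (star a * a))
    (hJfaithful : ∀ a : A, a ≠ 0 → 0 < J (star a * a))
    -- `Z` is an `A`-*-Galois extension
    (Z : Type) [Ring Z] [Algebra ℂ Z] [StarRing Z] [Nontrivial Z]
    (αZ : Z →ₐ[ℂ] A ⊗[ℂ] Z)
    (hcoassoc :
      (TensorProduct.assoc ℂ A A Z).toLinearMap ∘ₗ
          (TensorProduct.map (Coalgebra.comul (R := ℂ) (A := A)) (LinearMap.id (M := Z))) ∘ₗ
          αZ.toLinearMap =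
        (TensorProduct.map (LinearMap.id (M := A)) αZ.toLinearMap) ∘ₗ αZ.toLinearMap)
    (hcounit :
      (TensorProduct.lid ℂ Z).toLinearMap ∘ₗ
          (TensorProduct.map (Coalgebra.counit (R := ℂ) (A := A)) (LinearMap.id (M := Z))) ∘ₗ
          αZ.toLinearMap =
        LinearMap.id)
    (hGalois :
      Function.Bijective
        ((TensorProduct.map LinearMap.id (LinearMap.mul' ℂ Z)) ∘ₗ
          (TensorProduct.assoc ℂ A Z Z).toLinearMap ∘ₗ
          (TensorProduct.map αZ.toLinearMap LinearMap.id)))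
    -- the star on `A ⊗ Z`, and `α_Z` is a *-homomorphism
    (SZ : A ⊗[ℂ] Z → A ⊗[ℂ] Z)
    (hSZadd : ∀ u v, SZ (u + v) = SZ u + SZ v)
    (hSZtmul : ∀ (a : A) (z : Z), SZ (a ⊗ₜ[ℂ] z) = star a ⊗ₜ[ℂ] star z)
    (hαZstar : ∀ z : Z, αZ (star z) = SZ (αZ z))
    -- a positive Haar measure `μ` on `Z`
    (μ : Z →ₗ[ℂ] ℂ) (hμ1 : μ 1 = 1)
    (hμinv : ∀ z : Z,
      (TensorProduct.rid ℂ A)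
          (TensorProduct.map (LinearMap.id (M := A)) μ (αZ z)) =
        algebraMap ℂ A (μ z))
    (hμpos : ∀ z : Z, 0 ≤ μ (star z * z)) :
    -- then `μ` is faithful
    ∀ z : Z, z ≠ 0 → 0 < μ (star z * z) := by
  have : StarModule ℂ Z :=
    starModule_of_star_tmul hSZtmul (φ := Coalgebra.counit) Bialgebra.counit_one hμ1 hμpos
  exact fun z => star_Galois_extension_positive_haar_is_faithful_general ⟨hcoassoc, hcounit⟩ hGalois
    ⟨hμinv, hμ1⟩ hμpos
end
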